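/- Let V ⊆ V' be an immediate extension of valuation rings. Then V' is a filtered union of its V-subalgebras that are complete intersection V-algebras of finite type; that is, the set of such subalgebras is nonempty, directed under inclusion, and its union is all of V'. -/

import Mathlib

/-- An extension `V ⊆ V'` of valuation rings (given by an injective algebra structure)
is *immediate* if it is local, the induced map of residue fields is an isomorphism,
and the induced map of value groups is an isomorphism. -/
def IsImmediateExtension (V V' : Type*) [CommRing V] [IsLocalRing V]
    [CommRing V'] [IsLocalRing V'] [Algebra V V'] : Prop :=
  Function.Injective (algebraMap V V') ∧
  (∀ a : V, algebraMap V V' a ∈ IsLocalRing.maximalIdeal V' ↔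
    a ∈ IsLocalRing.maximalIdeal V) ∧
  (∀ x : V', ∃ a : V, x - algebraMap V V' a ∈ IsLocalRing.maximalIdeal V') ∧
  (∀ x : V', x ≠ 0 → ∃ a b : V, a ≠ 0 ∧ b ≠ 0 ∧
    Associated (algebraMap V V' a) (x * algebraMap V V' b))


/-- A commutative ring `S` is a *filtered union* of those of its `R`-subalgebras
satisfying the class (predicate) `C` if the collection of subalgebras satisfying `C`
is nonempty, directed under inclusion, and its union is all of `S`. -/
def Subalgebra.IsFilteredUnion {R S : Type*} [CommSemiring R] [CommSemiring S]
    [Algebra R S] (C : Subalgebra R S → Prop) : Prop :=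
  (∃ A, C A) ∧ DirectedOn (· ≤ ·) {A | C A} ∧ ∀ s : S, ∃ A, C A ∧ s ∈ A

/-- An `R`-algebra `A` is a *complete intersection `R`-algebra of finite type* if it is
isomorphic to `R[Y₁, …, Y_N]/(f₁, …, f_r)` for a regular sequence `f₁, …, f_r` of the
polynomial ring `R[Y₁, …, Y_N]`. -/
def Algebra.IsCompleteIntersectionOfFiniteType (R A : Type*) [CommRing R] [CommRing A]
    [Algebra R A] : Prop :=
  ∃ (N r : ℕ) (f : Fin r → MvPolynomial (Fin N) R),
    RingTheory.Sequence.IsRegular (MvPolynomial (Fin N) R) (List.ofFn f) ∧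
    Nonempty ((MvPolynomial (Fin N) R ⧸ Ideal.span (Set.range f)) ≃ₐ[R] A)

set_option linter.unusedSectionVars false

section Flatness

variable {R Q : Type*} [CommRing R] [CommRing Q] [Algebra R Q]

/-- The quotient `Q ⧸ H` is flat over `R`, in the form `(J Q + H : x) = (J : x) Q + H`. -/
def Ideal.IsColonFlat (R : Type*) {Q : Type*} [CommRing R] [CommRing Q] [Algebra R Q]
    (H : Ideal Q) : Prop :=
  ∀ (J : Ideal R) (x : R) (z : Q), algebraMap R Q x * z ∈ Ideal.map (algebraMap R Q) J ⊔ H →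
    z ∈ Ideal.map (algebraMap R Q) (Submodule.comap (LinearMap.mulLeft R x) J) ⊔ H

theorem Ideal.mem_of_forall_mem_sup_pow [IsNoetherianRing Q] [IsLocalRing Q] (I : Ideal Q)
    {y z : Q} (hy : y ∈ IsLocalRing.maximalIdeal Q)
    (h : ∀ e : ℕ, z ∈ I ⊔ Ideal.span {y ^ e}) : z ∈ I := by
  have key := Ideal.iInf_pow_smul_eq_bot_of_isLocalRing (M := Q ⧸ I)
    (IsLocalRing.maximalIdeal Q) (Ideal.IsPrime.ne_top inferInstance)
  have hz : (Ideal.Quotient.mk I z) ∈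
      (⨅ i : ℕ, IsLocalRing.maximalIdeal Q ^ i • (⊤ : Submodule Q (Q ⧸ I))) := by
    rw [Submodule.mem_iInf]
    intro e
    obtain ⟨a, ha, b, hb, rfl⟩ := Submodule.mem_sup.mp (h e)
    obtain ⟨c, rfl⟩ := Ideal.mem_span_singleton'.mp hb
    have : Ideal.Quotient.mk I (a + c * y ^ e) = y ^ e • Ideal.Quotient.mk I c := by
      rw [map_add, Ideal.Quotient.eq_zero_iff_mem.mpr ha, zero_add, mul_comm, map_mul]
      rfl
    rw [this]
    exact Submodule.smul_mem_smul (Ideal.pow_mem_pow hy e) trivial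
  rw [key, Submodule.mem_bot] at hz
  exact Ideal.Quotient.eq_zero_iff_mem.mp hz

/-- Regularity on the closed fibre lifts to regularity modulo every ideal of the base. -/
theorem Ideal.IsColonFlat.regular [IsNoetherianRing R] [IsNoetherianRing Q] [IsLocalRing Q]
    {H : Ideal Q} (hH : H.IsColonFlat R) (n : Ideal R)
    (hn : n.map (algebraMap R Q) ≤ IsLocalRing.maximalIdeal Q) {g : Q}
    (hg : ∀ J : Ideal R, n ≤ J → ∀ z, g * z ∈ Ideal.map (algebraMap R Q) J ⊔ H →
      z ∈ Ideal.map (algebraMap R Q) J ⊔ H) (J : Ideal R) :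
    ∀ z, g * z ∈ Ideal.map (algebraMap R Q) J ⊔ H → z ∈ Ideal.map (algebraMap R Q) J ⊔ H := by
  induction J using IsNoetherian.induction with
  | hgt J ih =>
  intro z hz
  by_cases hnJ : n ≤ J
  · exact hg J hnJ z hz
  obtain ⟨x, hxn, hxJ⟩ := SetLike.not_le_iff_exists.mp hnJ
  have big : ∀ y, y ∉ J → ∀ z, g * z ∈ Ideal.map (algebraMap R Q) J ⊔ H →
      z ∈ (Ideal.map (algebraMap R Q) J ⊔ H) ⊔ Ideal.span {algebraMap R Q y} := by
    intro y hy z hz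
    have hlt : J < J ⊔ Ideal.span {y} := by
      refine lt_of_le_of_ne le_sup_left fun h => hy ?_
      rw [h]
      exact Ideal.mem_sup_right (Ideal.mem_span_singleton_self y)
    have := ih _ hlt z (by
      refine (sup_le_sup_right (Ideal.map_mono le_sup_left) H) hz)
    rw [Ideal.map_sup, Ideal.map_span, Set.image_singleton] at this
    rwa [sup_right_comm]
  by_cases hpow : ∃ e, x ^ e ∈ J
  · classical
    -- `y` is a power of `x` outside `J` with `x * y ∈ J`
    obtain ⟨y, hyJ, hxy⟩ : ∃ y, y ∉ J ∧ x * y ∈ J := by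
      have h0 : Nat.find hpow ≠ 0 := by
        intro h0
        have := Nat.find_spec hpow
        rw [h0, pow_zero] at this
        exact hxJ (((Ideal.eq_top_iff_one J).mpr this) ▸ trivial)
      obtain ⟨k, hk⟩ := Nat.exists_eq_succ_of_ne_zero h0
      refine ⟨x ^ k, Nat.find_min hpow (by omega), ?_⟩
      rw [← pow_succ', ← Nat.succ_eq_add_one, ← hk]
      exact Nat.find_spec hpow
    obtain ⟨a, ha, b, hb, rfl⟩ := Submodule.mem_sup.mp (big y hyJ z hz)
    obtain ⟨c, rfl⟩ := Ideal.mem_span_singleton'.mp hb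
    refine Ideal.add_mem _ ha ?_
    have h1 : algebraMap R Q y * (g * c) ∈ Ideal.map (algebraMap R Q) J ⊔ H := by
      have : algebraMap R Q y * (g * c) = g * (a + c * algebraMap R Q y) - g * a := by ring
      rw [this]
      exact Ideal.sub_mem _ hz (Ideal.mul_mem_left _ _ ha)
    have h2 := hH J y _ h1
    have hlt : J < (Submodule.comap (LinearMap.mulLeft R y) J : Ideal R) := by
      refine lt_of_le_of_ne (fun r hr => ?_) fun h => hxJ ?_
      · exact Ideal.mul_mem_left _ _ hr
      · rw [h]
        change y * x ∈ J
        rwa [mul_comm]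
    have h3 := ih _ hlt c h2
    obtain ⟨p, hp, q, hq, rfl⟩ := Submodule.mem_sup.mp h3
    rw [add_mul]
    refine Ideal.add_mem _ (Ideal.mem_sup_left ?_) (Ideal.mem_sup_right (Ideal.mul_mem_right _ _ hq))
    refine Submodule.span_induction (p := fun p _ => p * algebraMap R Q y ∈ Ideal.map (algebraMap R Q) J)
      ?_ ?_ ?_ ?_ hp
    · rintro _ ⟨r, hr, rfl⟩
      rw [← map_mul, mul_comm]
      exact Ideal.mem_map_of_mem _ hr
    · simp
    · intro u w _ _ hu hw
      rw [add_mul]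
      exact Ideal.add_mem _ hu hw
    · intro u w _ hw
      rw [smul_eq_mul, mul_assoc]
      exact Ideal.mul_mem_left _ _ hw
  · push Not at hpow
    refine Ideal.mem_of_forall_mem_sup_pow _ (hn (Ideal.mem_map_of_mem _ hxn)) fun e => ?_
    rw [← map_pow]
    exact big _ (hpow e) z hz

theorem Ideal.IsColonFlat.sup_span_singleton {H : Ideal Q} (hH : H.IsColonFlat R) {g : Q}
    (hg : ∀ (J : Ideal R) (z : Q), g * z ∈ Ideal.map (algebraMap R Q) J ⊔ H →
      z ∈ Ideal.map (algebraMap R Q) J ⊔ H) :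
    (H ⊔ Ideal.span {g}).IsColonFlat R := by
  intro J x z hz
  rw [← sup_assoc] at hz ⊢
  obtain ⟨a, ha, b, hb, hab⟩ := Submodule.mem_sup.mp hz
  obtain ⟨c, rfl⟩ := Ideal.mem_span_singleton'.mp hb
  have h1 : g * c ∈ (J ⊔ Ideal.span {x}).map (algebraMap R Q) ⊔ H := by
    rw [Ideal.map_sup, Ideal.map_span, Set.image_singleton, sup_right_comm]
    have : g * c = algebraMap R Q x * z - a := by rw [← hab]; ring
    rw [this]
    exact Ideal.sub_mem _ (Ideal.mem_sup_right
      (Ideal.mul_mem_right _ _ (Ideal.mem_span_singleton_self _))) (Ideal.mem_sup_left ha)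
  have h2 := hg _ _ h1
  rw [Ideal.map_sup, Ideal.map_span, Set.image_singleton, sup_right_comm] at h2
  obtain ⟨p, hp, q, hq, rfl⟩ := Submodule.mem_sup.mp h2
  obtain ⟨c', rfl⟩ := Ideal.mem_span_singleton'.mp hq
  have h3 : algebraMap R Q x * (z - g * c') ∈ Ideal.map (algebraMap R Q) J ⊔ H := by
    have : algebraMap R Q x * (z - g * c') = a + g * p := by
      linear_combination -hab
    rw [this]
    exact Ideal.add_mem _ ha (Ideal.mul_mem_left _ _ hp)
  have h4 := hH J x _ h3
  have : z = (z - g * c') + c' * g := by ring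
  rw [this]
  exact Ideal.add_mem _ (Ideal.mem_sup_left h4)
    (Ideal.mem_sup_right (Ideal.mul_mem_left _ _ (Ideal.mem_span_singleton_self _)))

end Flatness

section LocalFlatness

open MvPolynomial

variable {R σ : Type*} [CommRing R]

theorem MvPolynomial.mem_map_C_sup_span_X_pow_iff (J : Ideal R) (T : Set σ) (e : σ → ℕ)
    (p : MvPolynomial σ R) :
    p ∈ J.map (C : R →+* MvPolynomial σ R) ⊔ Ideal.span ((fun j => X j ^ e j) '' T) ↔
      ∀ m : σ →₀ ℕ, (∀ j ∈ T, m j < e j) → coeff m p ∈ J := by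
  classical
  have hX : ((fun j => X j ^ e j) '' T : Set (MvPolynomial σ R)) =
      (fun s => monomial s (1 : R)) '' ((fun j => Finsupp.single j (e j)) '' T) := by
    rw [Set.image_image]
    refine Set.image_congr fun j _ => ?_
    rw [X_pow_eq_monomial]
  constructor
  · intro hp m hm
    obtain ⟨a, ha, b, hb, rfl⟩ := Submodule.mem_sup.mp hp
    rw [coeff_add]
    refine J.add_mem (mem_map_C_iff.mp ha m) ?_
    rw [hX, mem_ideal_span_monomial_image] at hb
    by_cases hmb : m ∈ b.support
    · obtain ⟨_, ⟨j, hj, rfl⟩, hle⟩ := hb m hmb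
      have := hle j
      simp only [Finsupp.single_eq_same] at this
      exact absurd (hm j hj) (not_lt.mpr this)
    · rw [notMem_support_iff.mp hmb]
      exact J.zero_mem
  · intro h
    rw [p.as_sum]
    refine Ideal.sum_mem _ fun m _ => ?_
    by_cases hm : ∀ j ∈ T, m j < e j
    · refine Ideal.mem_sup_left ?_
      rw [monomial_eq]
      exact Ideal.mul_mem_right _ _ (Ideal.mem_map_of_mem _ (h m hm))
    · push Not at hm
      obtain ⟨j, hj, hle⟩ := hm
      refine Ideal.mem_sup_right ?_
      have : monomial m (coeff m p) =
          monomial (m - Finsupp.single j (e j)) (coeff m p) * X j ^ e j := by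
        rw [X_pow_eq_monomial, monomial_mul, mul_one, tsub_add_cancel_of_le]
        exact Finsupp.single_le_iff.mpr hle
      rw [this]
      exact Ideal.mul_mem_left _ _ (Ideal.subset_span ⟨j, hj, rfl⟩)

theorem MvPolynomial.mem_of_X_pow_mul_mem (J : Ideal R) (T : Set σ) (e : σ → ℕ) {i : σ}
    (hi : i ∉ T) (z : MvPolynomial σ R)
    (hz : X i ^ e i * z ∈
      J.map (C : R →+* MvPolynomial σ R) ⊔ Ideal.span ((fun j => X j ^ e j) '' T)) :
    z ∈ J.map (C : R →+* MvPolynomial σ R) ⊔ Ideal.span ((fun j => X j ^ e j) '' T) := by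
  classical
  rw [mem_map_C_sup_span_X_pow_iff] at hz ⊢
  intro m hm
  have := hz (Finsupp.single i (e i) + m) (fun j hj => ?_)
  · rwa [X_pow_eq_monomial, coeff_monomial_mul, one_mul] at this
  · have hij : j ≠ i := fun h => hi (h ▸ hj)
    simpa [Finsupp.single_eq_of_ne hij] using hm j hj

section Localization

variable (𝔭 : Ideal (MvPolynomial σ R)) [𝔭.IsPrime]

theorem MvPolynomial.map_map_C_localization (J : Ideal R) :
    (J.map (C : R →+* MvPolynomial σ R)).map (algebraMap (MvPolynomial σ R) (Localization.AtPrime 𝔭)) =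
      J.map (algebraMap R (Localization.AtPrime 𝔭)) := by
  rw [Ideal.map_map, IsScalarTower.algebraMap_eq R (MvPolynomial σ R) (Localization.AtPrime 𝔭), algebraMap_eq]

theorem MvPolynomial.algebraMap_mem_map_localization_iff (I : Ideal (MvPolynomial σ R))
    (a : MvPolynomial σ R) :
    algebraMap (MvPolynomial σ R) (Localization.AtPrime 𝔭) a ∈ I.map (algebraMap (MvPolynomial σ R) (Localization.AtPrime 𝔭)) ↔
      ∃ s ∉ 𝔭, s * a ∈ I := by
  rw [IsLocalization.algebraMap_mem_map_algebraMap_iff 𝔭.primeCompl]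
  rfl

theorem MvPolynomial.exists_isUnit_mul_eq_algebraMap (z : (Localization.AtPrime 𝔭)) :
    ∃ (u : (Localization.AtPrime 𝔭)) (a : MvPolynomial σ R), IsUnit u ∧ u * z = algebraMap _ (Localization.AtPrime 𝔭) a := by
  obtain ⟨⟨a, s⟩, h⟩ := IsLocalization.surj 𝔭.primeCompl z
  exact ⟨_, a, IsLocalization.map_units (Localization.AtPrime 𝔭) s, by rw [← h, mul_comm]⟩

theorem MvPolynomial.isColonFlat_bot_localization : (⊥ : Ideal (Localization.AtPrime 𝔭)).IsColonFlat R := by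
  intro J x z hz
  rw [sup_bot_eq] at hz ⊢
  obtain ⟨u, a, hu, ha⟩ := exists_isUnit_mul_eq_algebraMap 𝔭 z
  rw [← Ideal.unit_mul_mem_iff_mem _ hu, ha, ← map_map_C_localization,
    algebraMap_mem_map_localization_iff]
  have h1 : algebraMap (MvPolynomial σ R) (Localization.AtPrime 𝔭) (C x * a) ∈
      (J.map (C : R →+* MvPolynomial σ R)).map (algebraMap (MvPolynomial σ R) (Localization.AtPrime 𝔭)) := by
    rw [map_map_C_localization, map_mul, ← ha, ← algebraMap_eq,
      ← IsScalarTower.algebraMap_apply R (MvPolynomial σ R) (Localization.AtPrime 𝔭), mul_left_comm]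
    exact Ideal.mul_mem_left _ _ hz
  rw [algebraMap_mem_map_localization_iff] at h1
  obtain ⟨s, hs, hsa⟩ := h1
  refine ⟨s, hs, mem_map_C_iff.mpr fun m => ?_⟩
  have := mem_map_C_iff.mp hsa m
  rw [mul_left_comm, coeff_C_mul] at this
  exact this

variable {𝔭} (n : Ideal R) (h w : σ → MvPolynomial σ R) (e : σ → ℕ)

theorem MvPolynomial.map_sup_span_eq_of_residual (J : Ideal R) (hnJ : n ≤ J) (T : Set σ)
    (hw : ∀ i ∈ T, w i ∉ 𝔭) (hres : ∀ i ∈ T, h i - w i * X i ^ e i ∈ n.map C) :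
    J.map (algebraMap R (Localization.AtPrime 𝔭)) ⊔ Ideal.span ((fun j => algebraMap _ (Localization.AtPrime 𝔭) (h j)) '' T) =
    (J.map (C : R →+* MvPolynomial σ R) ⊔ Ideal.span ((fun j => X j ^ e j) '' T)).map
      (algebraMap (MvPolynomial σ R) (Localization.AtPrime 𝔭)) := by
  have hmem : ∀ i ∈ T, algebraMap _ (Localization.AtPrime 𝔭) (h i - w i * X i ^ e i) ∈ J.map (algebraMap R (Localization.AtPrime 𝔭)) := by
    intro i hi
    rw [← map_map_C_localization]
    exact Ideal.mem_map_of_mem _ (Ideal.map_mono hnJ (hres i hi))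
  rw [Ideal.map_sup, map_map_C_localization, Ideal.map_span, Set.image_image]
  apply le_antisymm
  · refine sup_le le_sup_left (Ideal.span_le.mpr ?_)
    rintro _ ⟨i, hi, rfl⟩
    have : h i = (h i - w i * X i ^ e i) + w i * X i ^ e i := by ring
    dsimp only
    rw [this, map_add, map_mul]
    exact Ideal.add_mem _ (Ideal.mem_sup_left (hmem i hi)) (Ideal.mem_sup_right
      (Ideal.mul_mem_left _ _ (Ideal.subset_span ⟨i, hi, rfl⟩)))
  · refine sup_le le_sup_left (Ideal.span_le.mpr ?_)
    rintro _ ⟨i, hi, rfl⟩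
    have hu : IsUnit (algebraMap _ (Localization.AtPrime 𝔭) (w i)) :=
      IsLocalization.map_units (Localization.AtPrime 𝔭) (⟨w i, hw i hi⟩ : 𝔭.primeCompl)
    dsimp only
    rw [SetLike.mem_coe, ← Ideal.unit_mul_mem_iff_mem _ hu, ← map_mul]
    have : w i * X i ^ e i = h i - (h i - w i * X i ^ e i) := by ring
    rw [this, map_sub]
    exact Ideal.sub_mem _ (Ideal.mem_sup_right (Ideal.subset_span ⟨i, hi, rfl⟩))
      (Ideal.mem_sup_left (hmem i hi))

theorem MvPolynomial.regular_of_residual (J : Ideal R) (hnJ : n ≤ J) (T : Set σ)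
    (hw : ∀ i ∈ T, w i ∉ 𝔭) (hres : ∀ i ∈ T, h i - w i * X i ^ e i ∈ n.map C)
    {i : σ} (hi : i ∉ T) (hwi : w i ∉ 𝔭) (hresi : h i - w i * X i ^ e i ∈ n.map C) (z : (Localization.AtPrime 𝔭))
    (hz : algebraMap _ (Localization.AtPrime 𝔭) (h i) * z ∈
      J.map (algebraMap R (Localization.AtPrime 𝔭)) ⊔ Ideal.span ((fun j => algebraMap _ (Localization.AtPrime 𝔭) (h j)) '' T)) :
    z ∈ J.map (algebraMap R (Localization.AtPrime 𝔭)) ⊔ Ideal.span ((fun j => algebraMap _ (Localization.AtPrime 𝔭) (h j)) '' T) := by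
  obtain ⟨u, a, hu, ha⟩ := exists_isUnit_mul_eq_algebraMap 𝔭 z
  have h0 : algebraMap _ (Localization.AtPrime 𝔭) (w i * X i ^ e i * a) ∈
      J.map (algebraMap R (Localization.AtPrime 𝔭)) ⊔ Ideal.span ((fun j => algebraMap _ (Localization.AtPrime 𝔭) (h j)) '' T) := by
    have : w i * X i ^ e i * a = h i * a - (h i - w i * X i ^ e i) * a := by ring
    rw [this, map_sub, map_mul, map_mul, ← ha, mul_left_comm]
    refine Ideal.sub_mem _ (Ideal.mul_mem_left _ _ hz) (Ideal.mul_mem_right _ _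
      (Ideal.mem_sup_left ?_))
    rw [← map_map_C_localization]
    exact Ideal.mem_map_of_mem _ (Ideal.map_mono hnJ hresi)
  rw [map_sup_span_eq_of_residual n h w e J hnJ T hw hres] at h0 ⊢
  rw [← Ideal.unit_mul_mem_iff_mem _ hu, ha]
  rw [algebraMap_mem_map_localization_iff] at h0 ⊢
  obtain ⟨s, hs, hmem⟩ := h0
  refine ⟨s * w i, fun hc => ?_, mem_of_X_pow_mul_mem J T e hi _ ?_⟩
  · exact (Ideal.IsPrime.mem_or_mem inferInstance hc).elim hs hwi
  · convert hmem using 1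
    ring

theorem MvPolynomial.isColonFlat_and_regular_of_residual [IsNoetherianRing R] [Finite σ]
    (hn : n.map C ≤ 𝔭) (T : Finset σ)
    (hw : ∀ i ∈ T, w i ∉ 𝔭) (hres : ∀ i ∈ T, h i - w i * X i ^ e i ∈ n.map C) :
    (Ideal.span ((fun j => algebraMap _ (Localization.AtPrime 𝔭) (h j)) '' (T : Set σ))).IsColonFlat R ∧
    ∀ i ∉ T, w i ∉ 𝔭 → h i - w i * X i ^ e i ∈ n.map C → ∀ (J : Ideal R) (z : (Localization.AtPrime 𝔭)),
      algebraMap _ (Localization.AtPrime 𝔭) (h i) * z ∈ J.map (algebraMap R (Localization.AtPrime 𝔭)) ⊔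
        Ideal.span ((fun j => algebraMap _ (Localization.AtPrime 𝔭) (h j)) '' (T : Set σ)) →
      z ∈ J.map (algebraMap R (Localization.AtPrime 𝔭)) ⊔
        Ideal.span ((fun j => algebraMap _ (Localization.AtPrime 𝔭) (h j)) '' (T : Set σ)) := by
  classical
  have hloc : n.map (algebraMap R (Localization.AtPrime 𝔭)) ≤ IsLocalRing.maximalIdeal (Localization.AtPrime 𝔭) := by
    rw [← map_map_C_localization, Ideal.map_le_iff_le_comap]
    exact hn.trans_eq (Localization.AtPrime.under_maximalIdeal).symm
  have hnoeth : IsNoetherianRing (Localization.AtPrime 𝔭) :=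
    IsLocalization.isNoetherianRing 𝔭.primeCompl (Localization.AtPrime 𝔭) inferInstance
  have reg : ∀ T : Finset σ, (∀ i ∈ T, w i ∉ 𝔭) →
      (∀ i ∈ T, h i - w i * X i ^ e i ∈ n.map C) →
      (Ideal.span ((fun j => algebraMap _ (Localization.AtPrime 𝔭) (h j)) '' (T : Set σ))).IsColonFlat R →
      ∀ i ∉ T, w i ∉ 𝔭 → h i - w i * X i ^ e i ∈ n.map C → ∀ (J : Ideal R) (z : (Localization.AtPrime 𝔭)),
      algebraMap _ (Localization.AtPrime 𝔭) (h i) * z ∈ J.map (algebraMap R (Localization.AtPrime 𝔭)) ⊔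
        Ideal.span ((fun j => algebraMap _ (Localization.AtPrime 𝔭) (h j)) '' (T : Set σ)) →
      z ∈ J.map (algebraMap R (Localization.AtPrime 𝔭)) ⊔
        Ideal.span ((fun j => algebraMap _ (Localization.AtPrime 𝔭) (h j)) '' (T : Set σ)) := by
    intro T hw hres hflat i hi hwi hresi
    exact hflat.regular n hloc fun J hJ z hz =>
      regular_of_residual n h w e J hJ T hw hres hi hwi hresi z hz
  suffices hflat : (Ideal.span ((fun j => algebraMap _ (Localization.AtPrime 𝔭) (h j)) '' (T : Set σ))).IsColonFlat R from
    ⟨hflat, reg T hw hres hflat⟩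
  induction T using Finset.induction_on with
  | empty =>
    simp only [Finset.coe_empty, Set.image_empty, Ideal.span_empty]
    exact isColonFlat_bot_localization 𝔭
  | insert i T hi ih =>
    have hw' : ∀ j ∈ T, w j ∉ 𝔭 := fun j hj => hw j (Finset.mem_insert_of_mem hj)
    have hres' := fun j hj => hres j (Finset.mem_insert_of_mem hj)
    have h1 := ih hw' hres'
    have h2 := h1.sup_span_singleton (reg T hw' hres' h1 i hi
      (hw i (Finset.mem_insert_self _ _)) (hres i (Finset.mem_insert_self _ _)))
    rwa [Finset.coe_insert, Set.image_insert_eq, Ideal.span_insert, sup_comm]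

end Localization

theorem MvPolynomial.exists_mul_mem_span_of_residual [IsNoetherianRing R] [IsDomain R]
    [Finite σ] (n : Ideal R) [n.IsPrime] (h w : σ → MvPolynomial σ R) (e : σ → ℕ) (T : Finset σ)
    (hw : ∀ i ∈ T, constantCoeff (w i) ∉ n)
    (hres : ∀ i ∈ T, h i - w i * X i ^ e i ∈ n.map C) :
    (∀ (d : R) (z : MvPolynomial σ R), d ≠ 0 → C d * z ∈ Ideal.span (h '' (T : Set σ)) →
      ∃ s, constantCoeff s ∉ n ∧ s * z ∈ Ideal.span (h '' (T : Set σ))) ∧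
    ∀ i ∉ T, constantCoeff (w i) ∉ n → h i - w i * X i ^ e i ∈ n.map C →
      ∀ z, h i * z ∈ Ideal.span (h '' (T : Set σ)) →
        ∃ s, constantCoeff s ∉ n ∧ s * z ∈ Ideal.span (h '' (T : Set σ)) := by
  set 𝔭 : Ideal (MvPolynomial σ R) := n.comap constantCoeff with h𝔭
  have hn : n.map C ≤ 𝔭 := by
    rw [Ideal.map_le_iff_le_comap]
    intro x hx
    simpa [h𝔭] using hx
  obtain ⟨h1, h2⟩ := isColonFlat_and_regular_of_residual (𝔭 := 𝔭) n h w e hn T hw hres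
  have hspan : (Ideal.span ((fun j => algebraMap _ (Localization.AtPrime 𝔭) (h j)) '' (T : Set σ)))
      = (Ideal.span (h '' (T : Set σ))).map (algebraMap _ (Localization.AtPrime 𝔭)) := by
    rw [Ideal.map_span, Set.image_image]
  rw [hspan] at h1 h2
  constructor
  · intro d z hd hz
    have := h1 ⊥ d (algebraMap _ _ z) (by
      rw [Ideal.map_bot, bot_sup_eq, IsScalarTower.algebraMap_apply R (MvPolynomial σ R),
        algebraMap_eq, ← map_mul]
      exact Ideal.mem_map_of_mem _ hz)
    have hbot : (Submodule.comap (LinearMap.mulLeft R d) ⊥ : Ideal R) = ⊥ := by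
      rw [eq_bot_iff]
      intro y hy
      have : d * y = 0 := hy
      exact (mul_eq_zero.mp this).resolve_left hd
    rw [hbot, Ideal.map_bot, bot_sup_eq, algebraMap_mem_map_localization_iff] at this
    exact this
  · intro i hi hwi hresi z hz
    have := h2 i hi hwi hresi ⊥ (algebraMap _ _ z) (by
      rw [Ideal.map_bot, bot_sup_eq, ← map_mul]
      exact Ideal.mem_map_of_mem _ hz)
    rw [Ideal.map_bot, bot_sup_eq, algebraMap_mem_map_localization_iff] at this
    exact this

end LocalFlatness

section Descent

open MvPolynomial

theorem MvPolynomial.exists_subalgebra_isNoetherianRing_lift {σ V : Type*} [CommRing V]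
    (s : Set (MvPolynomial σ V)) (hs : s.Finite) :
    ∃ R : Subalgebra ℤ V, IsNoetherianRing R ∧
      ∀ p ∈ s, ∃ q : MvPolynomial σ R, map (algebraMap R V) q = p := by
  classical
  refine ⟨Algebra.adjoin ℤ (⋃ p ∈ s, (p.coeffs : Set V)), ?_, fun p hp => ?_⟩
  · exact isNoetherianRing_of_fg (Subalgebra.fg_def.mpr ⟨_,
      hs.biUnion fun p _ => Finset.finite_toSet _, rfl⟩)
  · have : p ∈ Set.range (map (algebraMap (Algebra.adjoin ℤ (⋃ p ∈ s, (p.coeffs : Set V))) V)) := by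
      rw [mem_range_map_iff_coeffs_subset]
      intro c hc
      exact ⟨⟨c, Algebra.subset_adjoin (Set.mem_biUnion hp hc)⟩, rfl⟩
    exact this

variable {σ V : Type*} [CommRing V] [IsDomain V] [IsLocalRing V] [Finite σ]

open IsLocalRing

theorem MvPolynomial.exists_isUnit_constantCoeff_mul_mem_span
    (h w : σ → MvPolynomial σ V) (e : σ → ℕ) (T : Finset σ)
    (hw : ∀ i ∈ T, IsUnit (constantCoeff (w i)))
    (hres : ∀ i ∈ T, h i - w i * X i ^ e i ∈ (maximalIdeal V).map C) :
    (∀ (d : V) (z : MvPolynomial σ V), d ≠ 0 → C d * z ∈ Ideal.span (h '' (T : Set σ)) →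
      ∃ s, IsUnit (constantCoeff s) ∧ s * z ∈ Ideal.span (h '' (T : Set σ))) ∧
    ∀ i ∉ T, IsUnit (constantCoeff (w i)) → h i - w i * X i ^ e i ∈ (maximalIdeal V).map C →
      ∀ z, h i * z ∈ Ideal.span (h '' (T : Set σ)) →
        ∃ s, IsUnit (constantCoeff s) ∧ s * z ∈ Ideal.span (h '' (T : Set σ)) := by
  have main : ∀ (d : V) (z : MvPolynomial σ V) (c : σ → MvPolynomial σ V),
    ∃ (R : Subalgebra ℤ V) (_ : IsNoetherianRing R) (h' w' c' : σ → MvPolynomial σ R)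
      (d' : R) (z' : MvPolynomial σ R),
      (∀ i, map (algebraMap R V) (h' i) = h i) ∧ (∀ i, map (algebraMap R V) (w' i) = w i) ∧
      (∀ i, map (algebraMap R V) (c' i) = c i) ∧ map (algebraMap R V) z' = z ∧
      algebraMap R V d' = d := by
    intro d z c
    obtain ⟨R, hR, hl⟩ := exists_subalgebra_isNoetherianRing_lift
      (Set.range h ∪ Set.range w ∪ Set.range c ∪ {z, C d})
      ((((Set.finite_range h).union (Set.finite_range w)).union (Set.finite_range c)).union
        (by simp))
    choose h' hh' using fun i => hl (h i) (by simp)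
    choose w' hw' using fun i => hl (w i) (by simp)
    choose c' hc' using fun i => hl (c i) (by simp)
    obtain ⟨z', hz'⟩ := hl z (by simp)
    obtain ⟨d', hd'⟩ := hl (C d) (by simp)
    refine ⟨R, hR, h', w', c', constantCoeff d', z', hh', hw', hc', hz', ?_⟩
    rw [← constantCoeff_map, hd', constantCoeff_C]
  have key : ∀ (R : Subalgebra ℤ V) (_ : IsNoetherianRing R) (h' w' : σ → MvPolynomial σ R),
      (∀ i, map (algebraMap R V) (h' i) = h i) → (∀ i, map (algebraMap R V) (w' i) = w i) →
      (∀ i, IsUnit (constantCoeff (w i)) →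
        constantCoeff (w' i) ∉ (maximalIdeal V).comap (algebraMap R V)) ∧
      (∀ i, h i - w i * X i ^ e i ∈ (maximalIdeal V).map C →
        h' i - w' i * X i ^ e i ∈ ((maximalIdeal V).comap (algebraMap R V)).map C) ∧
      (∀ z' : MvPolynomial σ R, (∃ s', constantCoeff s' ∉ (maximalIdeal V).comap (algebraMap R V) ∧
        s' * z' ∈ Ideal.span (h' '' (T : Set σ))) → ∃ s, IsUnit (constantCoeff s) ∧
          s * map (algebraMap R V) z' ∈ Ideal.span (h '' (T : Set σ))) := by
    intro R _ h' w' hh' hw'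
    refine ⟨fun i hi => ?_, fun i hi => ?_, fun z' ⟨s', hs', hmem⟩ => ?_⟩
    · rw [Ideal.mem_comap, ← constantCoeff_map, hw', mem_maximalIdeal, mem_nonunits_iff, not_not]
      exact hi
    · rw [mem_map_C_iff] at hi ⊢
      intro k
      rw [Ideal.mem_comap, ← coeff_map]
      simpa [hh', hw'] using hi k
    · refine ⟨map (algebraMap R V) s', ?_, ?_⟩
      · rwa [Ideal.mem_comap, ← constantCoeff_map, mem_maximalIdeal, mem_nonunits_iff,
          not_not] at hs'
      · rw [← map_mul]
        have := Ideal.mem_map_of_mem (map (algebraMap R V)) hmem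
        rw [Ideal.map_span, Set.image_image] at this
        simpa only [hh'] using this
  have inj : ∀ R : Subalgebra ℤ V, Function.Injective (map (σ := σ) (algebraMap R V)) :=
    fun R => map_injective _ Subtype.val_injective
  have lift : ∀ (R : Subalgebra ℤ V) (h' c' : σ → MvPolynomial σ R) (y : MvPolynomial σ R),
      (∀ i, map (algebraMap R V) (h' i) = h i) →
      (∑ i ∈ T, map (algebraMap R V) (c' i) * h i = map (algebraMap R V) y) →
      y ∈ Ideal.span (h' '' (T : Set σ)) := by
    intro R h' c' y hh' hy
    have : y = ∑ i ∈ T, c' i * h' i := by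
      apply inj R
      rw [← hy, map_sum]
      exact Finset.sum_congr rfl fun i _ => by rw [map_mul, hh']
    rw [this]
    exact Ideal.sum_mem _ fun i hi => Ideal.mul_mem_left _ _
      (Ideal.subset_span (Set.mem_image_of_mem _ hi))
  constructor
  · intro d z hd hz
    obtain ⟨c, hc⟩ := Submodule.mem_span_image_finset_iff_exists_fun' _ |>.mp hz
    obtain ⟨R, hR, h', w', c', d', z', hh', hw', hc', rfl, rfl⟩ := main d z c
    obtain ⟨k1, k2, k3⟩ := key R hR h' w' hh' hw'
    refine k3 _ ((exists_mul_mem_span_of_residual _ h' w' e T (fun i hi => k1 i (hw i hi))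
      (fun i hi => k2 i (hres i hi))).1 d' z' (fun h0 => hd (by rw [h0, map_zero])) ?_)
    refine lift R h' c' _ hh' ?_
    simp only [hc', map_mul, map_C]
    exact hc
  · intro i hi hwi hresi z hz
    obtain ⟨c, hc⟩ := Submodule.mem_span_image_finset_iff_exists_fun' _ |>.mp hz
    obtain ⟨R, hR, h', w', c', d', z', hh', hw', hc', rfl, -⟩ := main 0 z c
    obtain ⟨k1, k2, k3⟩ := key R hR h' w' hh' hw'
    refine k3 _ ((exists_mul_mem_span_of_residual _ h' w' e T (fun i hi => k1 i (hw i hi))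
      (fun i hi => k2 i (hres i hi))).2 i hi (k1 i hwi) (k2 i hresi) z' ?_)
    refine lift R h' c' _ hh' ?_
    simp only [hc', hh', map_mul]
    exact hc

end Descent

section Saturated

open MvPolynomial IsLocalRing

variable {V σ : Type*} [CommRing V] [IsDomain V] [ValuationRing V]

theorem Submodule.fg_of_saturated {M : Type*} [AddCommGroup M] [Module V M] [Module.Finite V M]
    (N : Submodule V M) (hN : ∀ (d : V) (x : M), d ≠ 0 → d • x ∈ N → x ∈ N) : N.FG := by
  have htors : Submodule.torsion V (M ⧸ N) = ⊥ := by
    rw [eq_bot_iff]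
    intro y hy
    obtain ⟨x, rfl⟩ := N.mkQ_surjective y
    obtain ⟨d, hd⟩ := (Submodule.mem_torsion_iff _).mp hy
    rw [Submodule.mem_bot, Submodule.mkQ_apply, Submodule.Quotient.mk_eq_zero]
    refine hN d x (nonZeroDivisors.coe_ne_zero d) ?_
    rw [← Submodule.Quotient.mk_eq_zero]
    exact hd
  have : Module.Flat V (M ⧸ N) := Module.Flat.flat_iff_torsion_eq_bot_of_isBezout.mpr htors
  have : Module.Free V (M ⧸ N) := Module.free_of_flat_of_isLocalRing
  have : Module.FinitePresentation V (M ⧸ N) := Module.finitePresentation_of_projective V _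
  have := Module.FinitePresentation.fg_ker N.mkQ N.mkQ_surjective
  rwa [Submodule.ker_mkQ] at this

theorem MvPolynomial.exists_eq_C_mul_of_map_residue_eq_zero (f : MvPolynomial σ V) (hf : f ≠ 0)
    (h : map (residue V) f = 0) :
    ∃ c ∈ maximalIdeal V, c ≠ 0 ∧ ∃ g, f = C c * g := by
  classical
  have hp := IsBezout.isPrincipal_of_FG (Ideal.span (f.coeffs : Set V)) ⟨f.coeffs, rfl⟩
  obtain ⟨c, hc⟩ := hp.principal
  have hdvd : ∀ k, c ∣ coeff k f := by
    intro k
    by_cases hk : coeff k f = 0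
    · rw [hk]
      exact dvd_zero c
    · rw [← Ideal.mem_span_singleton]
      exact hc.le (Ideal.subset_span (coeff_mem_coeffs k hk))
  obtain ⟨g, hg⟩ := (C_dvd_iff_dvd_coeff c f).mpr hdvd
  refine ⟨c, ?_, ?_, g, hg⟩
  · have hle : Ideal.span (f.coeffs : Set V) ≤ maximalIdeal V := by
      rw [Ideal.span_le]
      intro x hx
      obtain ⟨k, _, rfl⟩ := mem_coeffs_iff.mp hx
      rw [SetLike.mem_coe, ← residue_eq_zero_iff, ← coeff_map, h, coeff_zero]
    refine hle (hc ▸ Submodule.mem_span_singleton_self c)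
  · rintro rfl
    exact hf (by simpa using hg)

variable [Finite σ]

theorem MvPolynomial.fg_of_saturated (I : Ideal (MvPolynomial σ V))
    (hI : ∀ (d : V) (p : MvPolynomial σ V), d ≠ 0 → C d * p ∈ I → p ∈ I) : I.FG := by
  classical
  let _ : LinearOrder σ := LinearOrder.lift' (Finite.equivFin σ) (Finite.equivFin σ).injective
  let mo : MonomialOrder σ := MonomialOrder.lex
  let bar := map (σ := σ) (residue V)
  let A : ℕ × (σ →₀ ℕ) → Prop := fun a => ∃ f ∈ I, f.totalDegree ≤ a.1 + a.2.degree ∧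
    bar f ≠ 0 ∧ mo.degree (bar f) = a.2
  have hfin : {a | Minimal A a}.Finite :=
    WellQuasiOrderedLE.finite_of_isAntichain (setOfPred_minimal_antichain A)
  have hch : ∀ a : ℕ × (σ →₀ ℕ), ∃ f, A a → f ∈ I ∧ f.totalDegree ≤ a.1 + a.2.degree ∧
      bar f ≠ 0 ∧ mo.degree (bar f) = a.2 := by
    intro a
    by_cases ha : A a
    · obtain ⟨f, hf⟩ := ha
      exact ⟨f, fun _ => hf⟩
    · exact ⟨0, fun h => absurd h ha⟩
  choose F hF using hch
  let J : Ideal (MvPolynomial σ V) := Ideal.span (F '' {a | Minimal A a})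
  have hJI : J ≤ I := by
    rw [Ideal.span_le]
    rintro _ ⟨a, ha, rfl⟩
    exact (hF a ha.prop).1
  suffices hIJ : I ≤ J by
    rw [le_antisymm hIJ hJI]
    exact Submodule.fg_span (hfin.image F)
  intro f hf
  set d := f.totalDegree with hd
  let Id : Submodule V (MvPolynomial σ V) := I.restrictScalars V ⊓ restrictTotalDegree σ V d
  have hfg : Id.FG := by
    have h1 : (Submodule.comap (restrictTotalDegree σ V d).subtype (I.restrictScalars V)).FG := by
      refine Submodule.fg_of_saturated _ fun c x hc hx => hI c x hc ?_
      rw [← smul_eq_C_mul]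
      exact hx
    have h2 := h1.map (restrictTotalDegree σ V d).subtype
    rwa [Submodule.map_comap_subtype, inf_comm] at h2
  suffices hle : Id ≤ J.restrictScalars V by
    exact hle ⟨hf, (mem_restrictTotalDegree _ _ _).mpr le_rfl⟩
  refine Submodule.le_of_le_smul_of_le_jacobson_bot hfg (maximalIdeal_le_jacobson ⊥) ?_
  have main : ∀ (y : mo.syn) (g : MvPolynomial σ V), g ∈ Id → mo.toSyn (mo.degree (bar g)) = y →
      g ∈ J.restrictScalars V ⊔ maximalIdeal V • Id := by
    intro y
    induction y using WellFoundedLT.induction with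
    | ind y ih =>
    intro g hg hy
    have hzero : ∀ g ∈ Id, bar g = 0 → g ∈ J.restrictScalars V ⊔ maximalIdeal V • Id := by
      intro g hg h0
      by_cases hg0 : g = 0
      · rw [hg0]
        exact Submodule.zero_mem _
      obtain ⟨c, hc, hc0, g', rfl⟩ := exists_eq_C_mul_of_map_residue_eq_zero g hg0 h0
      refine Submodule.mem_sup_right ?_
      rw [← smul_eq_C_mul]
      refine Submodule.smul_mem_smul hc ⟨hI c g' hc0 hg.1, ?_⟩
      have := hg.2
      rw [SetLike.mem_coe, mem_restrictTotalDegree] at this ⊢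
      refine le_trans (totalDegree_le_of_support_subset fun k hk => ?_) this
      rw [mem_support_iff] at hk ⊢
      rw [coeff_C_mul]
      exact mul_ne_zero hc0 hk
    by_cases h0 : bar g = 0
    · exact hzero g hg h0
    set α := mo.degree (bar g) with hα
    have hgd : g.totalDegree ≤ d := (mem_restrictTotalDegree _ _ _).mp hg.2
    have hαd : α.degree ≤ d := by
      have hmem : α ∈ (bar g).support := by
        rw [mem_support_iff]
        exact mo.leadingCoeff_ne_zero_iff.mpr h0
      have := le_totalDegree (support_map_subset _ _ hmem)
      refine le_trans (le_of_eq ?_) (this.trans hgd)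
      rw [Finsupp.degree_apply]
      rfl
    obtain ⟨b, hb, hbmin⟩ := exists_minimal_le_of_wellFoundedLT A (d - α.degree, α)
      ⟨g, hg.1, by simpa using by omega, h0, rfl⟩
    obtain ⟨hb1, hb2, hb3, hb4⟩ := hF b hbmin.prop
    have hbα : b.2 ≤ α := hb.2
    have hbd : b.1 ≤ d - α.degree := hb.1
    obtain ⟨c, hc⟩ := residue_surjective (R := V)
      (mo.leadingCoeff (bar g) / mo.leadingCoeff (bar (F b)))
    set t := monomial (α - b.2) c * F b with ht
    have htJ : t ∈ J := Ideal.mul_mem_left _ _ (Ideal.subset_span ⟨b, hbmin, rfl⟩)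
    have hgt : g - t ∈ Id := by
      refine Submodule.sub_mem _ hg ⟨hJI htJ, ?_⟩
      rw [SetLike.mem_coe, mem_restrictTotalDegree]
      refine (totalDegree_mul _ _).trans ?_
      have h1 : (monomial (α - b.2) c).totalDegree ≤ (α - b.2).degree := by
        refine (totalDegree_monomial_le _ _).trans (le_of_eq ?_)
        rw [Finsupp.degree_apply]
        rfl
      have h2 : (α - b.2).degree + b.2.degree = α.degree := by
        rw [← map_add, tsub_add_cancel_of_le hbα]
      omega
    have hsplit : g = (g - t) + t := by ring
    rw [hsplit]
    refine Submodule.add_mem _ ?_ (Submodule.mem_sup_left htJ)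
    by_cases h1 : bar (g - t) = 0
    · exact hzero _ hgt h1
    refine ih _ ?_ (g - t) hgt rfl
    have hbart : bar t = monomial (α - b.2) (residue V c) * bar (F b) := by
      simp [bar, ht]
    have hc0 : residue V c ≠ 0 := by
      rw [hc]
      exact div_ne_zero (mo.leadingCoeff_ne_zero_iff.mpr h0) (mo.leadingCoeff_ne_zero_iff.mpr hb3)
    have hdegt : mo.degree (bar t) = α := by
      rw [hbart, mo.degree_mul (by simpa using hc0) hb3, mo.degree_monomial, if_neg hc0, hb4,
        tsub_add_cancel_of_le hbα]
    have hle : mo.toSyn (mo.degree (bar (g - t))) ≤ mo.toSyn α := by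
      rw [map_sub]
      refine mo.degree_sub_le.trans ?_
      rw [hdegt, ← hα, max_self]
    rw [← hy]
    refine lt_of_le_of_ne hle fun heq => ?_
    have heq' : mo.degree (bar (g - t)) = α := mo.toSyn.injective heq
    have hlc := mo.leadingCoeff_ne_zero_iff.mpr h1
    rw [MonomialOrder.leadingCoeff, heq'] at hlc
    apply hlc
    have h3 : coeff α (bar t) = residue V c * coeff b.2 (bar (F b)) := by
      rw [hbart, coeff_monomial_mul', if_pos tsub_le_self, tsub_tsub_cancel_of_le hbα]
    rw [map_sub, coeff_sub, h3, hc, ← hb4]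
    have h4 := mo.leadingCoeff_ne_zero_iff.mpr hb3
    change mo.leadingCoeff (bar g) - _ / _ * mo.leadingCoeff (bar (F b)) = 0
    rw [div_mul_cancel₀ _ h4, sub_self]
  exact fun g hg => main _ g hg rfl

end Saturated

section Rabinowitsch

open RingTheory.Sequence

variable {A B : Type*} [CommRing A] [CommRing B] (ι : A →+* B) (u : B) (s : A)

theorem Ideal.mem_of_pow_mul_mem_of_inverse {𝔟 : Ideal B} (h𝔟 : ι s * u - 1 ∈ 𝔟) (k : ℕ) {F : B}
    (hF : ι s ^ k * F ∈ 𝔟) : F ∈ 𝔟 := by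
  rw [← Ideal.Quotient.eq_zero_iff_mem] at *
  have h1 : Ideal.Quotient.mk 𝔟 (ι s) * Ideal.Quotient.mk 𝔟 u = 1 := by
    rw [map_sub, map_mul, map_one, sub_eq_zero] at h𝔟
    exact h𝔟
  rw [map_mul, map_pow] at hF
  calc Ideal.Quotient.mk 𝔟 F
      = (Ideal.Quotient.mk 𝔟 (ι s) * Ideal.Quotient.mk 𝔟 u) ^ k * Ideal.Quotient.mk 𝔟 F := by
        rw [h1, one_pow, one_mul]
    _ = Ideal.Quotient.mk 𝔟 u ^ k *
          (Ideal.Quotient.mk 𝔟 (ι s) ^ k * Ideal.Quotient.mk 𝔟 F) := by ring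
    _ = 0 := by rw [hF, mul_zero]

/-- Adjoining an inverse `u` of `s` turns a sequence that is regular up to `s`-multiples into a
weakly regular sequence. -/
theorem RingTheory.Sequence.isWeaklyRegular_cons_map_of_inverse
    (hclear : ∀ F : B, ∃ (k : ℕ) (f : A), ι s ^ k * F - ι f ∈ Ideal.span {ι s * u - 1})
    (hcomap : ∀ (𝔞 : Ideal A) (f : A), ι f ∈ Ideal.span {ι s * u - 1} ⊔ 𝔞.map ι →
      ∃ k : ℕ, s ^ k * f ∈ 𝔞)
    (hreg : IsSMulRegular B (ι s * u - 1)) (l : List A)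
    (hl : ∀ (j : ℕ) (hj : j < l.length) (z : A), l[j] * z ∈ Ideal.ofList (l.take j) →
      s * z ∈ Ideal.ofList (l.take j)) :
    IsWeaklyRegular B ((ι s * u - 1) :: l.map ι) := by
  refine ⟨fun i hi => ?_⟩
  rw [isSMulRegular_quotient_iff_mem_of_smul_mem]
  intro F hF
  rw [smul_eq_mul, Ideal.mul_top] at *
  rcases i with _ | j
  · simp only [List.take_zero, Ideal.ofList_nil, Submodule.mem_bot, List.getElem_cons_zero] at *
    exact hreg (by simpa using hF)
  have hj : j < l.length := by simpa using hi
  simp only [List.take_succ_cons, Ideal.ofList_cons, List.getElem_cons_succ, List.getElem_map,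
    ← List.map_take, ← Ideal.map_ofList] at hF ⊢
  obtain ⟨k, f, hf⟩ := hclear F
  have h1 : ι (l[j] * f) ∈ Ideal.span {ι s * u - 1} ⊔ (Ideal.ofList (l.take j)).map ι := by
    have : ι (l[j] * f) = ι s ^ k * (ι l[j] * F) - ι l[j] * (ι s ^ k * F - ι f) := by
      rw [map_mul]
      ring
    rw [this]
    exact Ideal.sub_mem _ (Ideal.mul_mem_left _ _ hF)
      (Ideal.mul_mem_left _ _ (Ideal.mem_sup_left hf))
  obtain ⟨m, hm⟩ := hcomap _ _ h1
  have h2 : s * (s ^ m * f) ∈ Ideal.ofList (l.take j) :=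
    hl j hj _ (by convert hm using 1; ring)
  refine Ideal.mem_of_pow_mul_mem_of_inverse ι u s
    (Ideal.mem_sup_left (Ideal.mem_span_singleton_self _)) (m + 1 + k) ?_
  have : ι s ^ (m + 1 + k) * F =
      ι s ^ (m + 1) * (ι s ^ k * F - ι f) + ι (s * (s ^ m * f)) := by
    rw [map_mul, map_mul, map_pow]
    ring
  rw [this]
  exact Ideal.add_mem _ (Ideal.mul_mem_left _ _ (Ideal.mem_sup_left hf))
    (Ideal.mem_sup_right (Ideal.mem_map_of_mem _ h2))

end Rabinowitsch

section Inverse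

open MvPolynomial

variable {V σ : Type*} [CommRing V] {N : ℕ} (e : Option σ ≃ Fin N) (s : MvPolynomial σ V)

/-- The inclusion of a polynomial ring in the polynomial ring with one more variable. -/
noncomputable def MvPolynomial.renameSome : MvPolynomial σ V →ₐ[V] MvPolynomial (Fin N) V :=
  rename (fun i => e (some i))

/-- Extension of an evaluation to one more variable. -/
noncomputable def MvPolynomial.aevalOption {B : Type*} [CommRing B] [Algebra V B] (b : B)
    (φ : σ → B) : MvPolynomial (Fin N) V →ₐ[V] B :=
  aeval fun k => (e.symm k).elim b φ

section

variable {B : Type*} [CommRing B] [Algebra V B] (b : B) (φ : σ → B)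

theorem MvPolynomial.aevalOption_renameSome (p : MvPolynomial σ V) :
    aevalOption e b φ (renameSome e p) = aeval φ p := by
  rw [aevalOption, renameSome, aeval_rename]
  congr 2
  ext i
  simp

theorem MvPolynomial.aevalOption_X_none : aevalOption e b φ (X (e none) : MvPolynomial (Fin N) V) = b := by
  simp [aevalOption]

end

theorem MvPolynomial.exists_pow_mul_sub_renameSome_mem (F : MvPolynomial (Fin N) V) :
    ∃ (k : ℕ) (f : MvPolynomial σ V), renameSome e s ^ k * F - renameSome e f ∈
      Ideal.span {renameSome e s * X (e none) - 1} := by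
  induction F using MvPolynomial.induction_on with
  | C a => exact ⟨0, C a, by simp [renameSome]⟩
  | add p q hp hq =>
    obtain ⟨k, f, hf⟩ := hp
    obtain ⟨l, g, hg⟩ := hq
    refine ⟨k + l, s ^ l * f + s ^ k * g, ?_⟩
    have : renameSome e s ^ (k + l) * (p + q) - renameSome e (s ^ l * f + s ^ k * g) =
        renameSome e s ^ l * (renameSome e s ^ k * p - renameSome e f) +
        renameSome e s ^ k * (renameSome e s ^ l * q - renameSome e g) := by
      simp only [map_add, map_mul, map_pow]
      ring
    rw [this]
    exact Ideal.add_mem _ (Ideal.mul_mem_left _ _ hf) (Ideal.mul_mem_left _ _ hg)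
  | mul_X p n hp =>
    obtain ⟨k, f, hf⟩ := hp
    obtain ⟨i, rfl⟩ := e.surjective n
    rcases i with _ | i
    · refine ⟨k + 1, f, ?_⟩
      have : renameSome e s ^ (k + 1) * (p * X (e none)) - renameSome e f =
          renameSome e s * X (e none) * (renameSome e s ^ k * p - renameSome e f) +
          renameSome e f * (renameSome e s * X (e none) - 1) := by ring
      rw [this]
      exact Ideal.add_mem _ (Ideal.mul_mem_left _ _ hf)
        (Ideal.mul_mem_left _ _ (Ideal.mem_span_singleton_self _))
    · refine ⟨k, f * X i, ?_⟩
      have : renameSome e s ^ k * (p * X (e (some i))) - renameSome e (f * X i) =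
          X (e (some i)) * (renameSome e s ^ k * p - renameSome e f) := by
        simp only [map_mul]
        have : renameSome e (X i : MvPolynomial σ V) = X (e (some i)) := by simp [renameSome]
        rw [this]
        ring
      rw [this]
      exact Ideal.mul_mem_left _ _ hf

theorem MvPolynomial.aevalOption_invSelf_renameSome (L : Type*) [CommRing L]
    [Algebra (MvPolynomial σ V) L] [Algebra V L] [IsScalarTower V (MvPolynomial σ V) L]
    (b : L) (p : MvPolynomial σ V) :
    aevalOption e b (fun i => algebraMap (MvPolynomial σ V) L (X i)) (renameSome e p) =
      algebraMap (MvPolynomial σ V) L p := by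
  rw [aevalOption_renameSome]
  have : (IsScalarTower.toAlgHom V (MvPolynomial σ V) L) =
      aeval fun i => algebraMap (MvPolynomial σ V) L (X i) := by
    ext i
    simp
  rw [← this]
  rfl

theorem MvPolynomial.exists_pow_mul_mem_of_renameSome_mem (𝔞 : Ideal (MvPolynomial σ V))
    (f : MvPolynomial σ V)
    (hf : renameSome e f ∈ Ideal.span {renameSome e s * X (e none) - 1} ⊔
      𝔞.map ((renameSome e : MvPolynomial σ V →ₐ[V] MvPolynomial (Fin N) V) : _ →+* _)) :
    ∃ k : ℕ, s ^ k * f ∈ 𝔞 := by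
  suffices h : algebraMap _ (Localization.Away s) f ∈ 𝔞.map (algebraMap _ (Localization.Away s)) by
    rw [IsLocalization.algebraMap_mem_map_algebraMap_iff (Submonoid.powers s)] at h
    obtain ⟨_, ⟨k, rfl⟩, hk⟩ := h
    exact ⟨k, hk⟩
  set χ := aevalOption (V := V) e (IsLocalization.Away.invSelf s : Localization.Away s)
    fun i => algebraMap (MvPolynomial σ V) (Localization.Away s) (X i) with hχdef
  have hχ : ∀ p, χ (renameSome e p) = algebraMap _ (Localization.Away s) p :=
    aevalOption_invSelf_renameSome e (Localization.Away s) _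
  rw [← hχ]
  have hle : Ideal.span {renameSome e s * X (e none) - 1} ⊔
      𝔞.map ((renameSome e : MvPolynomial σ V →ₐ[V] MvPolynomial (Fin N) V) : _ →+* _) ≤
      (𝔞.map (algebraMap _ (Localization.Away s))).comap χ := by
    refine sup_le (Ideal.span_le.mpr ?_) (Ideal.map_le_iff_le_comap.mpr fun p hp => ?_)
    · rw [Set.singleton_subset_iff, SetLike.mem_coe, Ideal.mem_comap, map_sub, map_mul, hχ, map_one,
        hχdef, aevalOption_X_none, IsLocalization.Away.mul_invSelf, sub_self]
      exact Ideal.zero_mem _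
    · rw [Ideal.mem_comap, Ideal.mem_comap, AlgHom.coe_toRingHom, hχ]
      exact Ideal.mem_map_of_mem _ hp
  exact hle hf

theorem MvPolynomial.isSMulRegular_renameSome_mul_X_sub_one [IsDomain V] :
    IsSMulRegular (MvPolynomial (Fin N) V) (renameSome e s * X (e none) - 1) := by
  refine IsSMulRegular.of_ne_zero fun h => ?_
  have h1 := congrArg (aevalOption e (0 : V) (fun _ => 0)) h
  rw [map_sub, map_mul, aevalOption_X_none] at h1
  simp at h1

end Inverse

section ResidualPresentation

open MvPolynomial IsLocalRing

/-- Elements of a `V`-algebra `Ω` indexed by a finite type, some of which are coupled by relations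
`h i` that reduce to a unit multiple of a power of the variable `i` modulo the maximal ideal, and
whose ideal of relations is generated by the `h i` up to inverting nonzero constants and
polynomials with unit constant coefficient. -/
structure ResidualPresentation (V Ω : Type*) [CommRing V] [IsLocalRing V] [CommRing Ω]
    [Algebra V Ω] where
  /-- The index type of the variables. -/
  σ : Type
  [finite : Finite σ]
  /-- The values of the variables. -/
  φ : σ → Ω
  /-- The variables carrying a relation. -/
  T : Set σ
  /-- The relations. -/
  h : σ → MvPolynomial σ V
  /-- The leading unit of the relations. -/
  w : σ → MvPolynomial σ V
  /-- The leading exponent of the relations. -/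
  e : σ → ℕ
  isUnit_w : ∀ i ∈ T, IsUnit (constantCoeff (w i))
  residual : ∀ i ∈ T, h i - w i * X i ^ e i ∈ (maximalIdeal V).map C
  aeval_h : ∀ i ∈ T, aeval φ (h i) = 0
  generic : ∀ p : MvPolynomial σ V, aeval φ p = 0 → ∃ (s : MvPolynomial σ V) (d : V),
    IsUnit (constantCoeff s) ∧ d ≠ 0 ∧ s * C d * p ∈ Ideal.span (h '' T)

namespace ResidualPresentation

attribute [instance] ResidualPresentation.finite

variable {V Ω : Type*} [CommRing V] [IsLocalRing V] [CommRing Ω] [Algebra V Ω]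

/-- The elements expressible as fractions with denominators of unit constant coefficient. -/
def loc (P : ResidualPresentation V Ω) : Subalgebra V Ω where
  carrier := {ω | ∃ s p : MvPolynomial P.σ V,
    IsUnit (constantCoeff s) ∧ aeval P.φ s * ω = aeval P.φ p}
  mul_mem' := by
    rintro x y ⟨s, p, hs, hx⟩ ⟨t, q, ht, hy⟩
    refine ⟨s * t, p * q, by rw [map_mul]; exact hs.mul ht, ?_⟩
    rw [map_mul, map_mul, ← hx, ← hy]
    ring
  add_mem' := by
    rintro x y ⟨s, p, hs, hx⟩ ⟨t, q, ht, hy⟩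
    refine ⟨s * t, t * p + s * q, by rw [map_mul]; exact hs.mul ht, ?_⟩
    rw [map_mul, map_add, map_mul, map_mul, ← hx, ← hy]
    ring
  algebraMap_mem' c := ⟨1, C c, by simp, by simp⟩

theorem mem_loc {P : ResidualPresentation V Ω} {x : Ω} : x ∈ P.loc ↔
    ∃ s p : MvPolynomial P.σ V, IsUnit (constantCoeff s) ∧ aeval P.φ s * x = aeval P.φ p :=
  Iff.rfl

theorem exists_uniform_denominator {V σ : Type*} [CommRing V] [IsDomain V] [ValuationRing V]
    [Finite σ] (h w : σ → MvPolynomial σ V) (e : σ → ℕ) (T : Finset σ)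
    (hw : ∀ i ∈ T, IsUnit (constantCoeff (w i)))
    (hres : ∀ i ∈ T, h i - w i * X i ^ e i ∈ (maximalIdeal V).map C) :
    ∃ s : MvPolynomial σ V, IsUnit (constantCoeff s) ∧
      ∀ p, (∃ s' : MvPolynomial σ V, IsUnit (constantCoeff s') ∧
        s' * p ∈ Ideal.span (h '' (T : Set σ))) → s * p ∈ Ideal.span (h '' (T : Set σ)) := by
  classical
  let J := Ideal.span (h '' (T : Set σ))
  let I : Ideal (MvPolynomial σ V) :=
    { carrier := {p | ∃ s' : MvPolynomial σ V, IsUnit (constantCoeff s') ∧ s' * p ∈ J}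
      zero_mem' := ⟨1, by simp, by simp⟩
      add_mem' := by
        rintro p q ⟨s, hs, hsp⟩ ⟨t, ht, htq⟩
        refine ⟨s * t, by rw [map_mul]; exact hs.mul ht, ?_⟩
        have : s * t * (p + q) = t * (s * p) + s * (t * q) := by ring
        rw [this]
        exact J.add_mem (J.mul_mem_left _ hsp) (J.mul_mem_left _ htq)
      smul_mem' := by
        rintro c p ⟨s, hs, hsp⟩
        refine ⟨s, hs, ?_⟩
        rw [smul_eq_mul, mul_left_comm]
        exact J.mul_mem_left _ hsp }
  have hIfg : I.FG := by
    refine fg_of_saturated I fun d p hd hp => ?_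
    obtain ⟨s, hs, hsp⟩ := hp
    obtain ⟨t, ht, htp⟩ := (exists_isUnit_constantCoeff_mul_mem_span h w e T hw hres).1 d (s * p) hd
      (by convert hsp using 1; ring)
    exact ⟨t * s, by rw [map_mul]; exact ht.mul hs, by rwa [mul_assoc]⟩
  obtain ⟨G, hG⟩ := hIfg
  have hmemG : ∀ g ∈ G, ∃ s' : MvPolynomial σ V, IsUnit (constantCoeff s') ∧ s' * g ∈ J := by
    intro g hg
    have : g ∈ I := hG ▸ Submodule.subset_span hg
    exact this
  choose! t ht htg using hmemG
  refine ⟨∏ g ∈ G, t g, ?_, fun p hp => ?_⟩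
  · rw [map_prod]
    exact IsUnit.prod_iff.mpr ht
  · have hp' : p ∈ Submodule.span (MvPolynomial σ V) (G : Set (MvPolynomial σ V)) := hG.ge hp
    refine Submodule.span_induction (p := fun p _ => (∏ g ∈ G, t g) * p ∈ J) ?_ ?_ ?_ ?_ hp'
    · intro g hg
      rw [← Finset.mul_prod_erase G t hg, mul_right_comm]
      exact J.mul_mem_right _ (htg g hg)
    · simp
    · intro x y _ _ hx hy
      rw [mul_add]
      exact J.add_mem hx hy
    · intro c x _ hx
      rw [smul_eq_mul, mul_left_comm]
      exact J.mul_mem_left _ hx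

theorem isUnit_aeval {V V' σ : Type*} [CommRing V] [CommRing V'] [IsLocalRing V'] [Algebra V V']
    (φ : σ → V') (hφ : ∀ i, φ i ∈ maximalIdeal V') (s : MvPolynomial σ V)
    (hs : IsUnit (constantCoeff s)) : IsUnit (aeval φ s) := by
  have : (residue V').comp (aeval φ : MvPolynomial σ V →ₐ[V] V').toRingHom =
      ((residue V').comp (algebraMap V V')).comp constantCoeff := by
    ext i
    · simp
    · simp [(residue_eq_zero_iff _).mpr (hφ i)]
  have h1 := congrArg (fun f => f s) this
  simp only [RingHom.comp_apply] at h1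
  have h2 : residue V' (aeval φ s) ≠ 0 := by
    intro h0
    have h3 : residue V' (algebraMap V V' (constantCoeff s)) = 0 := h1 ▸ h0
    rw [residue_eq_zero_iff] at h3
    exact h3 (hs.map _)
  exact (residue_ne_zero_iff_isUnit _).mp h2

open RingTheory.Sequence in
theorem exists_subalgebra_completeIntersection {V V' : Type*} [CommRing V] [IsDomain V]
    [ValuationRing V] [CommRing V'] [IsLocalRing V'] [Algebra V V']
    (P : ResidualPresentation V V') (hφ : ∀ i, P.φ i ∈ maximalIdeal V') (E : Finset V')
    (hE : ∀ x ∈ E, x ∈ P.loc) :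
    ∃ B : Subalgebra V V', Algebra.IsCompleteIntersectionOfFiniteType V B ∧ ∀ x ∈ E, x ∈ B := by
  classical
  have hTfin : P.T.Finite := Set.toFinite _
  obtain ⟨T, hT⟩ : ∃ T : Finset P.σ, (T : Set P.σ) = P.T := ⟨hTfin.toFinset, by simp⟩
  have hTmem : ∀ i ∈ T, i ∈ P.T := fun i hi => hT ▸ hi
  -- a denominator that works for all the sets of relations and all the elements of `E`
  have hden : ∀ T' : Finset P.σ, ∃ s : MvPolynomial P.σ V, IsUnit (constantCoeff s) ∧ (T' ⊆ T →
      ∀ p, (∃ s' : MvPolynomial P.σ V, IsUnit (constantCoeff s') ∧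
        s' * p ∈ Ideal.span (P.h '' (T' : Set P.σ))) →
          s * p ∈ Ideal.span (P.h '' (T' : Set P.σ))) := by
    intro T'
    by_cases hT' : T' ⊆ T
    · obtain ⟨s, hs, hs'⟩ := exists_uniform_denominator P.h P.w P.e T'
        (fun i hi => P.isUnit_w i (hTmem i (hT' hi))) (fun i hi => P.residual i (hTmem i (hT' hi)))
      exact ⟨s, hs, fun _ => hs'⟩
    · exact ⟨1, by simp, fun h => absurd h hT'⟩
  choose sT hsT hsT' using hden
  simp only [mem_loc] at hE
  choose! sE pE hsE hE' using hE
  obtain ⟨s, hs, hsuniv, hsdvd⟩ : ∃ s : MvPolynomial P.σ V, IsUnit (constantCoeff s) ∧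
      (∀ T' ⊆ T, ∀ p, (∃ s' : MvPolynomial P.σ V, IsUnit (constantCoeff s') ∧
        s' * p ∈ Ideal.span (P.h '' (T' : Set P.σ))) →
          s * p ∈ Ideal.span (P.h '' (T' : Set P.σ))) ∧ ∀ x ∈ E, sE x ∣ s := by
    refine ⟨(∏ T' ∈ T.powerset, sT T') * ∏ x ∈ E, sE x, ?_, fun T' hT' p hp => ?_, fun x hx => ?_⟩
    · rw [map_mul, map_prod, map_prod]
      exact (IsUnit.prod_iff.mpr fun T' _ => hsT T').mul (IsUnit.prod_iff.mpr hsE)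
    · obtain ⟨c, hc⟩ : sT T' ∣ (∏ T' ∈ T.powerset, sT T') * ∏ x ∈ E, sE x :=
        (Finset.dvd_prod_of_mem sT (Finset.mem_powerset.mpr hT')).mul_right _
      rw [hc, mul_right_comm]
      exact Ideal.mul_mem_right _ _ (hsT' T' hT' p hp)
    · exact (Finset.dvd_prod_of_mem sE hx).mul_left _
  have hker : ∀ p, aeval P.φ p = 0 → s * p ∈ Ideal.span (P.h '' (T : Set P.σ)) := by
    intro p hp
    obtain ⟨s', d, hs', hd, hmem⟩ := P.generic p hp
    rw [← hT] at hmem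
    obtain ⟨t, ht, htp⟩ := (exists_isUnit_constantCoeff_mul_mem_span P.h P.w P.e T
      (fun i hi => P.isUnit_w i (hTmem i hi)) (fun i hi => P.residual i (hTmem i hi))).1 d (s' * p) hd
      (by convert hmem using 1; ring)
    exact hsuniv T subset_rfl p ⟨t * s', by rw [map_mul]; exact ht.mul hs', by rwa [mul_assoc]⟩
  have hspan : ∀ l : List P.σ, Ideal.ofList (l.map P.h) =
      Ideal.span (P.h '' (l.toFinset : Set P.σ)) := by
    intro l
    rw [Ideal.ofList]
    congr 1
    ext x
    simp
  have hreg : ∀ (j : ℕ) (hj : j < (T.toList.map P.h).length) (z : MvPolynomial P.σ V),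
      (T.toList.map P.h)[j] * z ∈ Ideal.ofList ((T.toList.map P.h).take j) →
      s * z ∈ Ideal.ofList ((T.toList.map P.h).take j) := by
    intro j hj z hz
    have hj' : j < T.toList.length := by simpa using hj
    rw [← List.map_take, hspan] at hz ⊢
    rw [List.getElem_map] at hz
    have hsub : (T.toList.take j).toFinset ⊆ T := by
      intro i hi
      exact Finset.mem_toList.mp (List.mem_of_mem_take (List.mem_toFinset.mp hi))
    have hTj : T.toList[j] ∈ P.T := hTmem _ (Finset.mem_toList.mp (List.getElem_mem hj'))
    refine hsuniv _ hsub z ((exists_isUnit_constantCoeff_mul_mem_span P.h P.w P.e _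
      (fun i hi => P.isUnit_w i (hTmem i (hsub hi)))
      (fun i hi => P.residual i (hTmem i (hsub hi)))).2 T.toList[j] (fun hmem => ?_)
      (P.isUnit_w _ hTj) (P.residual _ hTj) z hz)
    rw [List.mem_toFinset, List.mem_take_iff_getElem] at hmem
    obtain ⟨k, hk, hkj⟩ := hmem
    have := (List.Nodup.getElem_inj_iff (Finset.nodup_toList T)).mp hkj
    omega
  obtain ⟨N, ⟨e⟩⟩ := Finite.exists_equiv_fin (Option P.σ)
  obtain ⟨u, hu⟩ := isUnit_aeval P.φ hφ s hs
  let Ψ : MvPolynomial (Fin N) V →ₐ[V] V' := aevalOption e (↑u⁻¹ : V') P.φ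
  let ι : MvPolynomial P.σ V →+* MvPolynomial (Fin N) V :=
    ((renameSome e : MvPolynomial P.σ V →ₐ[V] MvPolynomial (Fin N) V) : _ →+* _)
  have hΨι : ∀ p, Ψ (ι p) = aeval P.φ p := aevalOption_renameSome e _ _
  have hΨX : Ψ (X (e none)) = ↑u⁻¹ := aevalOption_X_none e _ _
  let l : List (MvPolynomial (Fin N) V) := (ι s * X (e none) - 1) :: (T.toList.map P.h).map ι
  have hl : Ideal.ofList l = RingHom.ker Ψ := by
    have hldef : Ideal.ofList l = Ideal.span {ι s * X (e none) - 1} ⊔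
        (Ideal.span (P.h '' (T : Set P.σ))).map ι := by
      rw [Ideal.ofList_cons, ← Ideal.map_ofList, hspan, Finset.toList_toFinset]
    rw [hldef]
    apply le_antisymm
    · refine sup_le (Ideal.span_le.mpr ?_) (Ideal.map_le_iff_le_comap.mpr (Ideal.span_le.mpr ?_))
      · rw [Set.singleton_subset_iff, SetLike.mem_coe, RingHom.mem_ker, map_sub, map_mul, hΨι,
          map_one, hΨX, ← hu, Units.mul_inv, sub_self]
      · rintro _ ⟨i, hi, rfl⟩
        rw [SetLike.mem_coe, Ideal.mem_comap, RingHom.mem_ker, hΨι]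
        exact P.aeval_h i (hTmem i hi)
    · intro F hF
      rw [RingHom.mem_ker] at hF
      obtain ⟨k, f, hf⟩ := exists_pow_mul_sub_renameSome_mem e s F
      have hΨf : aeval P.φ f = 0 := by
        obtain ⟨c, hc⟩ := Ideal.mem_span_singleton'.mp hf
        have := congrArg Ψ hc
        rw [map_sub, map_mul, map_mul, map_sub, map_mul, hF, map_one] at this
        rw [← hΨι]
        have h1 : Ψ (ι s) * Ψ (X (e none)) - 1 = 0 := by
          rw [hΨι, hΨX, ← hu, Units.mul_inv, sub_self]
        change Ψ c * (Ψ (ι s) * Ψ (X (e none)) - 1) = _ - Ψ (ι f) at this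
        rw [h1] at this
        simpa using this.symm
      have hsf := hker f hΨf
      refine Ideal.mem_of_pow_mul_mem_of_inverse ι (X (e none)) s
        (Ideal.mem_sup_left (Ideal.mem_span_singleton_self _)) (k + 1) ?_
      have : ι s ^ (k + 1) * F = ι s * (ι s ^ k * F - ι f) + ι (s * f) := by
        rw [map_mul]
        ring
      rw [this]
      exact Ideal.add_mem _ (Ideal.mul_mem_left _ _ (Ideal.mem_sup_left hf))
        (Ideal.mem_sup_right (Ideal.mem_map_of_mem _ hsf))
  have hweak : IsWeaklyRegular (MvPolynomial (Fin N) V) l :=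
    isWeaklyRegular_cons_map_of_inverse ι (X (e none)) s (exists_pow_mul_sub_renameSome_mem e s)
      (exists_pow_mul_mem_of_renameSome_mem e s) (isSMulRegular_renameSome_mul_X_sub_one e s)
      _ hreg
  have hspanl : Ideal.span (Set.range l.get) = RingHom.ker Ψ := by
    rw [← hl, Set.range_list_get, Ideal.ofList]
  refine ⟨Ψ.range, ⟨N, l.length, l.get, ?_, ⟨?_⟩⟩, fun x hx => ?_⟩
  · rw [List.ofFn_get]
    refine ⟨hweak, ?_⟩
    rw [hl, smul_eq_mul, Ideal.mul_top]
    exact (RingHom.ker_ne_top Ψ).symm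
  · exact (Ideal.quotientEquivAlgOfEq V hspanl).trans (Ideal.quotientKerEquivRange Ψ)
  · obtain ⟨c, hc⟩ := hsdvd x hx
    refine ⟨X (e none) * ι (c * pE x), ?_⟩
    change Ψ _ = _
    have hu' : (u : V') = aeval P.φ (sE x) * aeval P.φ c := by rw [hu, hc, map_mul]
    rw [map_mul, hΨι, hΨX, map_mul, ← hE' x hx, Units.inv_mul_eq_iff_eq_mul, hu']
    ring

end ResidualPresentation

end ResidualPresentation

namespace MvPolynomial

variable {V σ : Type*} [CommRing V]

theorem exists_eq_eval₂_rename_some (p : MvPolynomial (Option σ) V) :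
    ∃ q : Polynomial (MvPolynomial σ V),
      p = q.eval₂ ((rename some : MvPolynomial σ V →ₐ[V] MvPolynomial (Option σ) V) : _ →+* _)
        (X none) := by
  refine ⟨optionEquivLeft V σ p, ?_⟩
  conv_lhs => rw [← (optionEquivLeft V σ).symm_apply_apply p]
  rw [optionEquivLeft_symm_apply]
  rfl

theorem aeval_option_rename_some {Ω : Type*} [CommRing Ω] [Algebra V Ω] (y : Ω) (φ : σ → Ω)
    (p : MvPolynomial σ V) :
    aeval (fun k : Option σ => k.elim y φ) (rename some p) = aeval φ p := by
  rw [aeval_rename]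
  rfl

theorem constantCoeff_rename_some (p : MvPolynomial σ V) :
    constantCoeff (rename some p : MvPolynomial (Option σ) V) = constantCoeff p :=
  constantCoeff_rename _ _

theorem rename_mem_map_C {τ : Type*} (f : σ → τ) (I : Ideal V) {p : MvPolynomial σ V}
    (hp : p ∈ I.map (C : V →+* MvPolynomial σ V)) :
    rename f p ∈ I.map (C : V →+* MvPolynomial τ V) := by
  have h := Ideal.mem_map_of_mem (rename f : MvPolynomial σ V →ₐ[V] MvPolynomial τ V).toRingHom hp
  rw [Ideal.map_map] at h
  have h1 : (rename f : MvPolynomial σ V →ₐ[V] MvPolynomial τ V).toRingHom.comp C = C :=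
    RingHom.ext fun x => rename_C f x
  rw [h1] at h
  exact h

theorem aeval_option_eval₂ {L : Type*} [CommRing L] [Algebra V L] (φ : σ → L) (y : Polynomial L)
    (q : Polynomial (MvPolynomial σ V)) :
    aeval (fun k : Option σ => k.elim y fun i => Polynomial.C (φ i))
      (q.eval₂ ((rename some : MvPolynomial σ V →ₐ[V] MvPolynomial (Option σ) V) :
        MvPolynomial σ V →+* MvPolynomial (Option σ) V) (X none)) =
      (q.map ((aeval φ : MvPolynomial σ V →ₐ[V] L) : MvPolynomial σ V →+* L)).comp y := by
  induction q using Polynomial.induction_on' with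
  | add p q hp hq => simp only [Polynomial.eval₂_add, map_add, hp, hq, Polynomial.map_add,
      Polynomial.add_comp]
  | monomial n a =>
    rw [Polynomial.eval₂_monomial, Polynomial.map_monomial, Polynomial.monomial_comp, map_mul,
      map_pow, aeval_X]
    congr 1
    exact (aeval_option_rename_some _ _ _).trans
      (comp_aeval_apply φ (Polynomial.CAlgHom (R := V) (A := L)) a).symm

/-- Elimination of the extra variable by means of the linear relation `b * Y = g`. -/
theorem exists_pow_mul_sub_rename_mem (b g : MvPolynomial σ V) (p : MvPolynomial (Option σ) V) :
    ∃ (k : ℕ) (f : MvPolynomial σ V), rename some b ^ k * p - rename some f ∈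
      Ideal.span {rename some b * X none - rename some g} := by
  induction p using MvPolynomial.induction_on with
  | C a => exact ⟨0, C a, by simp⟩
  | add p q hp hq =>
    obtain ⟨k, f, hf⟩ := hp
    obtain ⟨l, f', hf'⟩ := hq
    refine ⟨k + l, b ^ l * f + b ^ k * f', ?_⟩
    have : rename some b ^ (k + l) * (p + q) - rename some (b ^ l * f + b ^ k * f') =
        rename some b ^ l * (rename some b ^ k * p - rename some f) +
        rename some b ^ k * (rename some b ^ l * q - rename some f') := by
      simp only [map_add, map_mul, map_pow]
      ring
    rw [this]
    exact Ideal.add_mem _ (Ideal.mul_mem_left _ _ hf) (Ideal.mul_mem_left _ _ hf')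
  | mul_X p n hp =>
    obtain ⟨k, f, hf⟩ := hp
    rcases n with _ | i
    · refine ⟨k + 1, f * g, ?_⟩
      have : rename some b ^ (k + 1) * (p * X none) - rename some (f * g) =
          rename some b * X none * (rename some b ^ k * p - rename some f) +
          rename some f * (rename some b * X none - rename some g) := by
        simp only [map_mul]
        ring
      rw [this]
      exact Ideal.add_mem _ (Ideal.mul_mem_left _ _ hf)
        (Ideal.mul_mem_left _ _ (Ideal.mem_span_singleton_self _))
    · refine ⟨k, f * X i, ?_⟩
      have : rename some b ^ k * (p * X (some i)) - rename some (f * X i) =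
          X (some i) * (rename some b ^ k * p - rename some f) := by
        rw [map_mul, rename_X]
        ring
      rw [this]
      exact Ideal.mul_mem_left _ _ hf

end MvPolynomial

namespace ResidualPresentation

open MvPolynomial IsLocalRing

variable {V Ω : Type*} [CommRing V] [IsLocalRing V] [CommRing Ω] [Algebra V Ω]

theorem φ_mem_loc (P : ResidualPresentation V Ω) (i : P.σ) : P.φ i ∈ P.loc :=
  ⟨1, X i, by simp, by simp⟩

/-- The same relations for a family of elements satisfying the same polynomial equations. -/
def transport {Ω' : Type*} [CommRing Ω'] [Algebra V Ω'] (P : ResidualPresentation V Ω)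
    (ψ : P.σ → Ω') (hψ : ∀ p : MvPolynomial P.σ V, aeval ψ p = 0 ↔ aeval P.φ p = 0) :
    ResidualPresentation V Ω' where
  σ := P.σ
  φ := ψ
  T := P.T
  h := P.h
  w := P.w
  e := P.e
  isUnit_w := P.isUnit_w
  residual := P.residual
  aeval_h i hi := (hψ _).mpr (P.aeval_h i hi)
  generic p hp := P.generic p ((hψ p).mp hp)

/-- Adding one relation for a variable that has none. -/
noncomputable def adjoinRelation {Ω' : Type*} [CommRing Ω'] [Algebra V Ω']
    (P : ResidualPresentation V Ω) (ψ : P.σ → Ω') {r : P.σ} (hr : r ∉ P.T)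
    (G w : MvPolynomial P.σ V) (a : ℕ) (hw : IsUnit (constantCoeff w))
    (hG : G - w * X r ^ a ∈ (maximalIdeal V).map C)
    (hψ : ∀ p : MvPolynomial P.σ V, aeval P.φ p = 0 → aeval ψ p = 0) (hψG : aeval ψ G = 0)
    (hgen : ∀ p : MvPolynomial P.σ V, aeval ψ p = 0 → ∃ (s : MvPolynomial P.σ V) (d : V)
      (q : MvPolynomial P.σ V), IsUnit (constantCoeff s) ∧ d ≠ 0 ∧
      s * C d * p - G * q ∈ Ideal.span (P.h '' P.T)) :
    ResidualPresentation V Ω' :=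
  letI := Classical.decEq P.σ
  have hne : ∀ i ∈ P.T, i ≠ r := fun _ hi h => hr (h ▸ hi)
  { σ := P.σ
    φ := ψ
    T := insert r P.T
    h := Function.update P.h r G
    w := Function.update P.w r w
    e := Function.update P.e r a
    isUnit_w := by
      rintro i (rfl | hi)
      · simpa using hw
      · simpa [hne i hi] using P.isUnit_w i hi
    residual := by
      rintro i (rfl | hi)
      · simpa using hG
      · simpa [hne i hi] using P.residual i hi
    aeval_h := by
      rintro i (rfl | hi)
      · simpa using hψG
      · simpa [hne i hi] using hψ _ (P.aeval_h i hi)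
    generic := by
      intro p hp
      obtain ⟨s, d, q, hs, hd, hmem⟩ := hgen p hp
      refine ⟨s, d, hs, hd, ?_⟩
      have h1 : Ideal.span (P.h '' P.T) ≤ Ideal.span (Function.update P.h r G '' insert r P.T) := by
        rw [Ideal.span_le]
        rintro _ ⟨i, hi, rfl⟩
        exact Ideal.subset_span ⟨i, Or.inr hi, by simp [hne i hi]⟩
      have h2 : G ∈ Ideal.span (Function.update P.h r G '' insert r P.T) :=
        Ideal.subset_span ⟨r, Or.inl rfl, by simp⟩
      have := Ideal.add_mem _ (h1 hmem) (Ideal.mul_mem_right q _ h2)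
      rwa [sub_add_cancel] at this }

/-- Adjoining a fraction `y = G / (s t)` with `t` in the maximal ideal. -/
noncomputable def adjoinFraction [IsDomain V] (P : ResidualPresentation V Ω) {r : P.σ}
    (hr : r ∉ P.T) (s G w : MvPolynomial P.σ V) (t : V) (a : ℕ) (y : Ω)
    (hs : IsUnit (constantCoeff s)) (hw : IsUnit (constantCoeff w)) (ht : t ∈ maximalIdeal V)
    (ht0 : t ≠ 0) (hG : G - w * X r ^ a ∈ (maximalIdeal V).map C)
    (hy : aeval P.φ (s * C t) * y = aeval P.φ G) :
    ResidualPresentation V Ω :=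
  letI := Classical.decEq P.σ
  have hne : ∀ i ∈ P.T, i ≠ r := fun _ hi h => hr (h ▸ hi)
  let g : MvPolynomial (Option P.σ) V := rename some (s * C t) * X none - rename some G
  { σ := Option P.σ
    φ := fun k => k.elim y P.φ
    T := some '' insert r P.T
    h := fun k => k.elim 0 (Function.update (fun i => rename some (P.h i)) r g)
    w := fun k => k.elim 0 (Function.update (fun i => rename some (P.w i)) r (-rename some w))
    e := fun k => k.elim 0 (Function.update P.e r a)
    isUnit_w := by
      rintro _ ⟨i, rfl | hi, rfl⟩
      · simpa [constantCoeff_rename_some] using hw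
      · simpa [hne i hi, constantCoeff_rename_some] using P.isUnit_w i hi
    residual := by
      rintro _ ⟨i, rfl | hi, rfl⟩
      · have h1 : g - -rename some w * X (some i) ^ a =
            C t * (rename some s * X none) - rename some (G - w * X i ^ a) := by
          simp only [g, map_mul, map_sub, map_pow, rename_C, rename_X]
          ring
        simp only [Option.elim_some, Function.update_self]
        rw [h1]
        exact Ideal.sub_mem _ (Ideal.mul_mem_right _ _ (Ideal.mem_map_of_mem _ ht))
          (rename_mem_map_C _ _ hG)
      · have := rename_mem_map_C (some : P.σ → Option P.σ) _ (P.residual i hi)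
        simpa [hne i hi] using this
    aeval_h := by
      rintro _ ⟨i, rfl | hi, rfl⟩
      · simp only [Option.elim_some, Function.update_self, g]
        rw [map_sub, map_mul, aeval_option_rename_some, aeval_option_rename_some, aeval_X,
          Option.elim_none, hy, sub_self]
      · simp only [Option.elim_some, Function.update_of_ne (hne i hi)]
        rw [aeval_option_rename_some]
        exact P.aeval_h i hi
    generic := by
      intro p hp
      have hgmem : g ∈ Ideal.span ((fun k : Option P.σ => k.elim 0
          (Function.update (fun i => rename some (P.h i)) r g)) '' (some '' insert r P.T)) :=
        Ideal.subset_span ⟨some r, ⟨r, Or.inl rfl, rfl⟩, by simp⟩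
      have hmap : (Ideal.span (P.h '' P.T)).map
          ((rename some : MvPolynomial P.σ V →ₐ[V] MvPolynomial (Option P.σ) V) : _ →+* _) ≤
          Ideal.span ((fun k : Option P.σ => k.elim 0
          (Function.update (fun i => rename some (P.h i)) r g)) '' (some '' insert r P.T)) := by
        rw [Ideal.map_span, Ideal.span_le]
        rintro _ ⟨_, ⟨i, hi, rfl⟩, rfl⟩
        exact Ideal.subset_span ⟨some i, ⟨i, Or.inr hi, rfl⟩, by simp [hne i hi]⟩
      obtain ⟨k, f, hf⟩ := exists_pow_mul_sub_rename_mem (s * C t) G p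
      have hf0 : aeval P.φ f = 0 := by
        obtain ⟨c, hc⟩ := Ideal.mem_span_singleton'.mp hf
        have := congrArg (aeval fun k : Option P.σ => k.elim y P.φ) hc
        rw [map_mul, map_sub, map_mul, aeval_option_rename_some, aeval_option_rename_some, aeval_X,
          Option.elim_none, hy, sub_self, mul_zero, map_sub, map_mul, hp, mul_zero, zero_sub,
          aeval_option_rename_some] at this
        exact neg_eq_zero.mp this.symm
      obtain ⟨s', d, hs', hd, hmem⟩ := P.generic f hf0
      refine ⟨rename some (s' * s ^ k), d * t ^ k, ?_, mul_ne_zero hd (pow_ne_zero _ ht0), ?_⟩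
      · rw [constantCoeff_rename_some, map_mul, map_pow]
        exact hs'.mul (hs.pow k)
      · have : rename some (s' * s ^ k) * C (d * t ^ k) * p =
            rename some (s' * C d) * (rename some (s * C t) ^ k * p - rename some f) +
            rename some (s' * C d * f) := by
          simp only [map_mul, map_pow, rename_C]
          ring
        rw [this]
        refine Ideal.add_mem _ (Ideal.mul_mem_left _ _ ?_) (hmap (Ideal.mem_map_of_mem _ hmem))
        exact (Ideal.span_singleton_le_iff_mem _).mpr hgmem hf }

theorem adjoinFree_generic {L : Type*} [Field L] [Algebra V L] [IsDomain V]
    (P : ResidualPresentation V L) (y : Polynomial L) (hy : y.natDegree = 1)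
    (p : MvPolynomial (Option P.σ) V)
    (hp : aeval (fun k : Option P.σ => k.elim y fun i => Polynomial.C (P.φ i)) p = 0) :
    ∃ (s : MvPolynomial (Option P.σ) V) (d : V), IsUnit (constantCoeff s) ∧ d ≠ 0 ∧
      s * C d * p ∈ Ideal.span ((fun k : Option P.σ => k.elim 0 fun i => rename some (P.h i)) ''
        (some '' P.T)) := by
  classical
  obtain ⟨q, rfl⟩ := exists_eq_eval₂_rename_some p
  have h1 := aeval_option_eval₂ P.φ y q
  rw [hp] at h1
  have h2 : q.map ((aeval P.φ : MvPolynomial P.σ V →ₐ[V] L) :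
      MvPolynomial P.σ V →+* L) = 0 := by
    rcases Polynomial.comp_eq_zero_iff.mp h1.symm with h | h
    · exact h
    · rw [h.2, Polynomial.natDegree_C] at hy
      omega
  have h3 : ∀ k, aeval P.φ (q.coeff k) = 0 := by
    intro k
    have := congrArg (fun f => Polynomial.coeff f k) h2
    rwa [Polynomial.coeff_map, Polynomial.coeff_zero] at this
  choose s d hs hd hmem using fun k => P.generic (q.coeff k) (h3 k)
  refine ⟨rename some (∏ k ∈ q.support, s k), ∏ k ∈ q.support, d k, ?_,
    Finset.prod_ne_zero_iff.mpr fun k _ => hd k, ?_⟩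
  · rw [constantCoeff_rename_some, map_prod]
    exact IsUnit.prod_iff.mpr fun k _ => hs k
  · rw [Polynomial.eval₂_eq_sum, Polynomial.sum, Finset.mul_sum]
    refine Ideal.sum_mem _ fun k hk => ?_
    have hmap : (Ideal.span (P.h '' P.T)).map
        ((rename some : MvPolynomial P.σ V →ₐ[V] MvPolynomial (Option P.σ) V) : _ →+* _) ≤
        Ideal.span ((fun k : Option P.σ => k.elim 0 fun i => rename some (P.h i)) ''
          (some '' P.T)) := by
      rw [Ideal.map_span, Ideal.span_le]
      rintro _ ⟨_, ⟨i, hi, rfl⟩, rfl⟩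
      exact Ideal.subset_span ⟨some i, ⟨i, hi, rfl⟩, rfl⟩
    have h4 := hmap (Ideal.mem_map_of_mem _ (hmem k))
    rw [← Finset.mul_prod_erase _ s hk, ← Finset.mul_prod_erase _ d hk]
    have : rename some (s k * ∏ k ∈ q.support.erase k, s k) *
        C (d k * ∏ k ∈ q.support.erase k, d k) *
        (rename some (q.coeff k) * (X none : MvPolynomial (Option P.σ) V) ^ k) =
        (rename some (∏ k ∈ q.support.erase k, s k) * C (∏ k ∈ q.support.erase k, d k) *
          X none ^ k) * rename some (s k * C (d k) * q.coeff k) := by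
      simp only [map_mul, rename_C]
      ring
    change rename some (s k * ∏ k ∈ q.support.erase k, s k) *
        C (d k * ∏ k ∈ q.support.erase k, d k) *
        (rename some (q.coeff k) * (X none : MvPolynomial (Option P.σ) V) ^ k) ∈ _
    rw [this]
    exact Ideal.mul_mem_left _ _ h4

/-- Adjoining a free variable, with value a polynomial of degree one. -/
noncomputable def adjoinFree {L : Type*} [Field L] [Algebra V L] [IsDomain V]
    (P : ResidualPresentation V L) (y : Polynomial L) (hy : y.natDegree = 1) :
    ResidualPresentation V (Polynomial L) where
  σ := Option P.σ
  φ k := k.elim y fun i => Polynomial.C (P.φ i)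
  T := some '' P.T
  h k := k.elim 0 fun i => rename some (P.h i)
  w k := k.elim 0 fun i => rename some (P.w i)
  e k := k.elim 0 P.e
  isUnit_w := by
    rintro _ ⟨i, hi, rfl⟩
    simpa [constantCoeff_rename_some] using P.isUnit_w i hi
  residual := by
    rintro _ ⟨i, hi, rfl⟩
    simpa using rename_mem_map_C (some : P.σ → Option P.σ) _ (P.residual i hi)
  aeval_h := by
    rintro _ ⟨i, hi, rfl⟩
    rw [Option.elim_some, aeval_option_rename_some]
    have := comp_aeval_apply P.φ (Polynomial.CAlgHom (R := V) (A := L)) (P.h i)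
    rw [P.aeval_h i hi, map_zero] at this
    exact this.symm
  generic := fun p hp => adjoinFree_generic P y hy p hp

end ResidualPresentation

section

open IsLocalRing

/-- A valuation `w` of a `K`-algebra `Ω` whose residue ring and value monoid come from the
valuation ring `V` of `K`. -/
structure Valuation.IsImmediateOver (V K : Type*) {Ω Γ₀ : Type*} [CommRing V] [Field K]
    [CommRing Ω] [Algebra V Ω] [Algebra K Ω] [LinearOrderedCommGroupWithZero Γ₀]
    (w : Valuation Ω Γ₀) : Prop where
  map_le_one (a : V) : w (algebraMap V Ω a) ≤ 1
  isUnit_of_map_eq_one (a : V) : w (algebraMap V Ω a) = 1 → IsUnit a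
  exists_sub_lt (f : Ω) : w f ≤ 1 → ∃ a : V, w (f - algebraMap V Ω a) < 1
  exists_map_eq (f : Ω) : w f ≠ 0 → ∃ c : K, w (algebraMap K Ω c) = w f

namespace Valuation

section Scalars

variable {K Ω Γ₀ : Type*} [Field K] [CommRing Ω] [Algebra K Ω]
  [LinearOrderedCommGroupWithZero Γ₀] (w : Valuation Ω Γ₀)

theorem map_smul_eq (c : K) (f : Ω) : w (c • f) = w (algebraMap K Ω c) * w f := by
  rw [Algebra.smul_def, map_mul]

theorem map_algebraMap_ne_zero {c : K} (hc : c ≠ 0) : w (algebraMap K Ω c) ≠ 0 := by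
  intro h
  have : w (algebraMap K Ω c * algebraMap K Ω c⁻¹) = 0 := by rw [map_mul, h, zero_mul]
  rw [← map_mul, mul_inv_cancel₀ hc, map_one, map_one] at this
  exact one_ne_zero this

theorem ne_zero_of_map_algebraMap_ne_zero {c : K} (hc : w (algebraMap K Ω c) ≠ 0) : c ≠ 0 := by
  rintro rfl
  simp at hc

theorem map_algebraMap_inv (c : K) : w (algebraMap K Ω c⁻¹) = (w (algebraMap K Ω c))⁻¹ :=
  map_inv₀ (w.comap (algebraMap K Ω)) c

end Scalars

namespace IsImmediateOver

variable {V K Ω Γ₀ : Type*} [CommRing V] [IsDomain V] [ValuationRing V] [Field K] [Algebra V K]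
  [IsFractionRing V K] [CommRing Ω] [Algebra V Ω] [Algebra K Ω] [IsScalarTower V K Ω]
  [LinearOrderedCommGroupWithZero Γ₀] {w : Valuation Ω Γ₀}

theorem map_eq_one_iff (hw : w.IsImmediateOver V K) (a : V) :
    w (algebraMap V Ω a) = 1 ↔ IsUnit a := by
  refine ⟨hw.isUnit_of_map_eq_one a, fun ⟨u, hu⟩ => le_antisymm (hw.map_le_one a) ?_⟩
  subst hu
  by_contra! h
  have h1 : w (algebraMap V Ω (u * (u⁻¹ : Vˣ) : V)) < 1 := by
    rw [map_mul, map_mul]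
    exact mul_lt_one_of_lt_of_le h (hw.map_le_one _)
  simp at h1

theorem map_lt_one_iff (hw : w.IsImmediateOver V K) (a : V) :
    w (algebraMap V Ω a) < 1 ↔ a ∈ maximalIdeal V := by
  rw [mem_maximalIdeal, mem_nonunits_iff, ← hw.map_eq_one_iff, lt_iff_le_and_ne]
  exact and_iff_right (hw.map_le_one a)

theorem exists_algebraMap_eq (hw : w.IsImmediateOver V K) {c : K}
    (hc : w (algebraMap K Ω c) ≤ 1) : ∃ a : V, algebraMap V K a = c := by
  rcases ValuationRing.isInteger_or_isInteger V c with h | ⟨a, ha⟩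
  · exact h
  · by_cases hc0 : c = 0
    · exact ⟨0, by simp [hc0]⟩
    have h1 : w (algebraMap V Ω a) = 1 := by
      refine le_antisymm (hw.map_le_one a) ?_
      rw [IsScalarTower.algebraMap_apply V K Ω, ha, map_algebraMap_inv]
      exact (one_le_inv₀ (zero_lt_iff.mpr (w.map_algebraMap_ne_zero hc0))).mpr hc
    obtain ⟨u, rfl⟩ := hw.isUnit_of_map_eq_one a h1
    refine ⟨(u⁻¹ : Vˣ), ?_⟩
    rw [← inv_inv c, ← ha]
    refine eq_inv_of_mul_eq_one_left ?_
    rw [← map_mul, Units.inv_mul, map_one]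

theorem exists_smul_le_one (hw : w.IsImmediateOver V K) (f : Ω) :
    ∃ c : K, c ≠ 0 ∧ w (c • f) ≤ 1 := by
  by_cases hf : w f = 0
  · exact ⟨1, one_ne_zero, by simp [hf]⟩
  · obtain ⟨c, hc⟩ := hw.exists_map_eq f hf
    have hc0 := w.ne_zero_of_map_algebraMap_ne_zero (hc ▸ hf)
    exact ⟨c⁻¹, inv_ne_zero hc0, by rw [map_smul_eq, map_algebraMap_inv, hc, inv_mul_cancel₀ hf]⟩

/-- Splitting an element of value at most one into a constant and a small part. -/
theorem exists_eq_add_smul (hw : w.IsImmediateOver V K) (S : Submodule K Ω) (h1 : (1 : Ω) ∈ S)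
    (hS : ∀ f ∈ S, w f = 0 → f = 0) {α : Ω} (hα : α ∈ S) (hle : w α ≤ 1) :
    ∃ (e ε : V) (α' : Ω), ε ∈ maximalIdeal V ∧ α' ∈ S ∧ w α' ≤ 1 ∧
      α = algebraMap V Ω e + algebraMap V Ω ε * α' ∧ (w α = 1 → IsUnit e) := by
  obtain ⟨e, he⟩ := hw.exists_sub_lt α hle
  have hmem : α - algebraMap V Ω e ∈ S := by
    refine S.sub_mem hα ?_
    rw [IsScalarTower.algebraMap_apply V K Ω, Algebra.algebraMap_eq_smul_one]
    exact S.smul_mem _ h1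
  have hunit : w α = 1 → IsUnit e := by
    intro h
    rw [← hw.map_eq_one_iff, ← h]
    refine Valuation.map_eq_of_sub_lt w ?_
    rw [Valuation.map_sub_swap, h]
    exact he
  by_cases h0 : w (α - algebraMap V Ω e) = 0
  · exact ⟨e, 0, 0, Ideal.zero_mem _, S.zero_mem, by simp, by
      have := hS _ hmem h0
      rw [mul_zero, add_zero, ← sub_eq_zero, this], hunit⟩
  · obtain ⟨c, hc⟩ := hw.exists_map_eq _ h0
    have hc0 := w.ne_zero_of_map_algebraMap_ne_zero (hc ▸ h0)
    obtain ⟨ε, hε⟩ := hw.exists_algebraMap_eq (c := c) (by rw [hc]; exact he.le)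
    refine ⟨e, ε, c⁻¹ • (α - algebraMap V Ω e), ?_, S.smul_mem _ hmem, ?_, ?_, hunit⟩
    · rw [← hw.map_lt_one_iff, IsScalarTower.algebraMap_apply V K Ω, hε, hc]
      exact he
    · rw [map_smul_eq, map_algebraMap_inv, hc, inv_mul_cancel₀ h0]
    · rw [IsScalarTower.algebraMap_apply V K Ω ε, hε, ← Algebra.smul_def, smul_smul,
        mul_inv_cancel₀ hc0, one_smul, add_sub_cancel]

theorem comap (hw : w.IsImmediateOver V K) {Ω' : Type*} [CommRing Ω'] [Algebra V Ω']
    [Algebra K Ω'] [IsScalarTower V K Ω'] (f : Ω' →ₐ[K] Ω) :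
    (w.comap (f : Ω' →+* Ω)).IsImmediateOver V K where
  map_le_one a := by
    have := hw.map_le_one a
    rwa [IsScalarTower.algebraMap_apply V K Ω, ← f.commutes,
      ← IsScalarTower.algebraMap_apply V K Ω'] at this
  isUnit_of_map_eq_one a h := by
    refine hw.isUnit_of_map_eq_one a ?_
    rwa [IsScalarTower.algebraMap_apply V K Ω, ← f.commutes,
      ← IsScalarTower.algebraMap_apply V K Ω']
  exists_sub_lt g hg := by
    obtain ⟨a, ha⟩ := hw.exists_sub_lt (f g) hg
    refine ⟨a, ?_⟩
    rwa [IsScalarTower.algebraMap_apply V K Ω, ← f.commutes,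
      ← IsScalarTower.algebraMap_apply V K Ω', ← _root_.map_sub] at ha
  exists_map_eq g hg := by
    obtain ⟨c, hc⟩ := hw.exists_map_eq (f g) hg
    refine ⟨c, ?_⟩
    rwa [← f.commutes] at hc

end IsImmediateOver

end Valuation

namespace ResidualPresentation

open MvPolynomial

variable {V K Ω Γ₀ : Type*} [CommRing V] [IsDomain V] [ValuationRing V] [Field K] [Algebra V K]
  [IsFractionRing V K] [CommRing Ω] [Algebra V Ω] [Algebra K Ω] [IsScalarTower V K Ω]
  [LinearOrderedCommGroupWithZero Γ₀] {w : Valuation Ω Γ₀}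

/-- All variables take values of valuation less than one. -/
def IsSmall (P : ResidualPresentation V Ω) (w : Valuation Ω Γ₀) : Prop :=
  ∀ i, w (P.φ i) < 1

theorem IsSmall.map_aeval_sub_lt {P : ResidualPresentation V Ω} (hP : P.IsSmall w)
    (hw : w.IsImmediateOver V K) (p : MvPolynomial P.σ V) :
    w (aeval P.φ p - algebraMap V Ω (constantCoeff p)) < 1 := by
  induction p using MvPolynomial.induction_on with
  | C a => simp
  | add p q hp hq =>
    rw [map_add, map_add, map_add, add_sub_add_comm]
    exact w.map_add_lt hp hq
  | mul_X p i hp =>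
    have : w (aeval P.φ p) ≤ 1 := by
      rw [← sub_add_cancel (aeval P.φ p) (algebraMap V Ω (constantCoeff p))]
      exact w.map_add_le hp.le (hw.map_le_one _)
    simp only [map_mul, constantCoeff_X, mul_zero, map_zero, sub_zero, aeval_X]
    exact (mul_le_of_le_one_left' this).trans_lt (hP i)

theorem IsSmall.map_aeval_eq_one_iff {P : ResidualPresentation V Ω} (hP : P.IsSmall w)
    (hw : w.IsImmediateOver V K) (p : MvPolynomial P.σ V) :
    w (aeval P.φ p) = 1 ↔ IsUnit (constantCoeff p) := by
  have h := hP.map_aeval_sub_lt hw p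
  rw [← hw.map_eq_one_iff]
  constructor
  · intro h1
    rw [← h1]
    exact w.map_eq_of_sub_lt (by rwa [Valuation.map_sub_swap, h1])
  · intro h1
    rw [← h1]
    exact w.map_eq_of_sub_lt (by rwa [h1])

theorem IsSmall.mem_loc_of_mul_eq {P : ResidualPresentation V Ω} (hP : P.IsSmall w)
    (hw : w.IsImmediateOver V K) {u f z : Ω} (hu : u ∈ P.loc) (hu1 : w u = 1) (hf : f ∈ P.loc)
    (hz : u * z = f) : z ∈ P.loc := by
  obtain ⟨s, p, hs, hp⟩ := mem_loc.mp hu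
  obtain ⟨t, q, ht, hq⟩ := mem_loc.mp hf
  refine mem_loc.mpr ⟨p * t, s * q, ?_, ?_⟩
  · rw [map_mul]
    refine IsUnit.mul ?_ ht
    rw [← hP.map_aeval_eq_one_iff hw, ← hp, map_mul, hu1, mul_one]
    exact (hP.map_aeval_eq_one_iff hw s).mpr hs
  · rw [map_mul, map_mul, ← hp, ← hq, ← hz]
    ring

/-- The elements with a nonzero constant multiple in `loc`. -/
def locK (K : Type*) [Field K] [Algebra V K] [IsFractionRing V K] [Algebra K Ω]
    [IsScalarTower V K Ω] (P : ResidualPresentation V Ω) : Subalgebra K Ω where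
  carrier := {ω | ∃ d : V, d ≠ 0 ∧ algebraMap V Ω d * ω ∈ P.loc}
  mul_mem' := by
    rintro x y ⟨d, hd, hx⟩ ⟨e, he, hy⟩
    refine ⟨d * e, mul_ne_zero hd he, ?_⟩
    rw [map_mul, mul_mul_mul_comm]
    exact mul_mem hx hy
  add_mem' := by
    rintro x y ⟨d, hd, hx⟩ ⟨e, he, hy⟩
    refine ⟨d * e, mul_ne_zero hd he, ?_⟩
    have : algebraMap V Ω (d * e) * (x + y) = algebraMap V Ω e * (algebraMap V Ω d * x) +
        algebraMap V Ω d * (algebraMap V Ω e * y) := by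
      rw [map_mul]
      ring
    rw [this]
    exact add_mem (mul_mem (algebraMap_mem _ _) hx) (mul_mem (algebraMap_mem _ _) hy)
  algebraMap_mem' c := by
    obtain ⟨a, b, hb, rfl⟩ := IsFractionRing.div_surjective (A := V) c
    have hb0 : algebraMap V K b ≠ 0 :=
      IsFractionRing.to_map_ne_zero_of_mem_nonZeroDivisors hb
    refine ⟨b, nonZeroDivisors.ne_zero hb, ?_⟩
    rw [IsScalarTower.algebraMap_apply V K Ω, ← map_mul, mul_div_cancel₀ _ hb0,
      ← IsScalarTower.algebraMap_apply V K Ω]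
    exact algebraMap_mem _ _

theorem mem_locK {P : ResidualPresentation V Ω} {x : Ω} :
    x ∈ P.locK K ↔ ∃ d : V, d ≠ 0 ∧ algebraMap V Ω d * x ∈ P.loc :=
  Iff.rfl

theorem mem_locK_of_mem_loc {P : ResidualPresentation V Ω} {x : Ω} (hx : x ∈ P.loc) :
    x ∈ P.locK K :=
  ⟨1, one_ne_zero, by simpa using hx⟩

theorem mem_locK_of_smul_mem {P : ResidualPresentation V Ω} {x : Ω} {c : K} (hc : c ≠ 0)
    (hx : c • x ∈ P.locK K) : x ∈ P.locK K := by
  have := (P.locK K).smul_mem hx c⁻¹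
  rwa [smul_smul, inv_mul_cancel₀ hc, one_smul] at this

theorem locK_mono {P Q : ResidualPresentation V Ω} (h : P.loc ≤ Q.loc) : P.locK K ≤ Q.locK K :=
  fun _ ⟨d, hd, hx⟩ => ⟨d, hd, h hx⟩

theorem mem_loc_transport {Ω' : Type*} [CommRing Ω'] [Algebra V Ω'] (P : ResidualPresentation V Ω)
    (f : Ω →ₐ[V] Ω') (hf : ∀ p : MvPolynomial P.σ V,
      aeval (fun i => f (P.φ i)) p = 0 ↔ aeval P.φ p = 0)
    {x : Ω} (hx : x ∈ P.loc) : f x ∈ (P.transport _ hf).loc := by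
  obtain ⟨s, p, hs, h⟩ := mem_loc.mp hx
  refine mem_loc.mpr ⟨s, p, hs, ?_⟩
  have := congrArg f h
  rw [map_mul, comp_aeval_apply, comp_aeval_apply] at this
  exact this

theorem mem_loc_adjoinRelation {Ω' : Type*} [CommRing Ω'] [Algebra V Ω']
    (P : ResidualPresentation V Ω) (f : Ω →ₐ[V] Ω') {r : P.σ} (hr : r ∉ P.T)
    (G w : MvPolynomial P.σ V) (a : ℕ) (hw : IsUnit (constantCoeff w))
    (hG : G - w * X r ^ a ∈ (maximalIdeal V).map C) (hψ hψG hgen)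
    {x : Ω} (hx : x ∈ P.loc) :
    f x ∈ (P.adjoinRelation (fun i => f (P.φ i)) hr G w a hw hG hψ hψG hgen).loc := by
  obtain ⟨s, p, hs, h⟩ := mem_loc.mp hx
  refine mem_loc.mpr ⟨s, p, hs, ?_⟩
  have := congrArg f h
  rw [map_mul, comp_aeval_apply, comp_aeval_apply] at this
  exact this

theorem loc_le_adjoinFraction (P : ResidualPresentation V Ω) {r : P.σ}
    (hr : r ∉ P.T) (s G w : MvPolynomial P.σ V) (t : V) (a : ℕ) (y : Ω) (hs hw ht ht0 hG hy) :
    P.loc ≤ (P.adjoinFraction hr s G w t a y hs hw ht ht0 hG hy).loc := by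
  intro x hx
  obtain ⟨s', p, hs', h⟩ := mem_loc.mp hx
  refine mem_loc.mpr ⟨rename some s', rename some p, ?_, ?_⟩
  · exact (constantCoeff_rename_some s').symm ▸ hs'
  · refine Eq.trans ?_ (h.trans ?_)
    · exact congrArg (· * x) (aeval_option_rename_some y P.φ s')
    · exact (aeval_option_rename_some y P.φ p).symm

theorem C_mem_loc_adjoinFree {L : Type*} [Field L] [Algebra V L] (P : ResidualPresentation V L)
    (y : Polynomial L) (hy : y.natDegree = 1) {x : L} (hx : x ∈ P.loc) :
    Polynomial.C x ∈ (P.adjoinFree y hy).loc := by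
  have hC : ∀ p : MvPolynomial P.σ V,
      aeval (fun k : Option P.σ => k.elim y fun i => Polynomial.C (P.φ i)) (rename some p) =
      Polynomial.C (aeval P.φ p) := fun p =>
    (aeval_option_rename_some _ _ _).trans
      (comp_aeval_apply P.φ (Polynomial.CAlgHom (R := V) (A := L)) p).symm
  obtain ⟨s', p, hs', h⟩ := mem_loc.mp hx
  refine mem_loc.mpr ⟨rename some s', rename some p, ?_, ?_⟩
  · exact (constantCoeff_rename_some s').symm ▸ hs'
  · refine Eq.trans ?_ (Eq.trans (congrArg Polynomial.C h) ?_)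
    · rw [Polynomial.C_mul]
      exact congrArg (· * Polynomial.C x) (hC s')
    · exact (hC p).symm

end ResidualPresentation

end

section

theorem Polynomial.exists_sum_mul_pow_of_monic {L : Type*} [Field L] {q : Polynomial L}
    (hq : q.Monic) (hdeg : 1 ≤ q.natDegree) (p : Polynomial L) :
    ∃ (J : ℕ) (b : ℕ → Polynomial L), (∀ j, (b j).degree < q.natDegree) ∧
      p = ∑ j ∈ Finset.range J, b j * q ^ j := by
  induction hn : p.natDegree using Nat.strong_induction_on generalizing p with
  | _ n ih =>
    have hmod : (p %ₘ q).degree < q.natDegree := by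
      rw [← Polynomial.degree_eq_natDegree hq.ne_zero]
      exact Polynomial.degree_modByMonic_lt p hq
    by_cases hlt : p.natDegree < q.natDegree
    · refine ⟨1, fun _ => p, fun _ => ?_, by simp⟩
      exact (Polynomial.degree_le_natDegree).trans_lt (by exact_mod_cast hlt)
    · obtain ⟨J, b, hb, h⟩ := ih (p /ₘ q).natDegree (by
        rw [Polynomial.natDegree_divByMonic p hq]
        omega) (p /ₘ q) rfl
      refine ⟨J + 1, fun j => j.casesOn (p %ₘ q) b, ?_, ?_⟩
      · rintro (_ | j)
        · exact hmod
        · exact hb j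
      · rw [Finset.sum_range_succ']
        have h1 := Polynomial.modByMonic_add_div p q
        conv_lhs => rw [← h1, h, Finset.mul_sum]
        simp only [pow_zero, mul_one, pow_succ]
        rw [add_comm]
        congr 1
        refine Finset.sum_congr rfl fun j _ => ?_
        ring

open IsLocalRing

section Expansion

variable {V K L Γ₀ : Type*} [CommRing V] [IsDomain V] [ValuationRing V] [Field K] [Algebra V K]
  [IsFractionRing V K] [Field L] [Algebra V L] [Algebra K L] [IsScalarTower V K L]
  [LinearOrderedCommGroupWithZero Γ₀] {w : Valuation (Polynomial L) Γ₀}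

/-- The expansion of a polynomial along the powers of a monic polynomial `q`, normalised such
that some coefficient has value one. -/
theorem Valuation.IsImmediateOver.exists_expansion (hw : w.IsImmediateOver V K)
    {q : Polynomial L} (hq : q.Monic) (hdeg : 1 ≤ q.natDegree) {d : K} (hd : d ≠ 0)
    (hind : ∀ f : Polynomial L, f.degree < q.natDegree → w f = 0 → f = 0)
    {p : Polynomial L} (hp : p ≠ 0) :
    ∃ (J : ℕ) (c : K) (e ε : ℕ → V) (α : ℕ → Polynomial L), c ≠ 0 ∧
      (∀ j, ε j ∈ maximalIdeal V) ∧ (∀ j, (α j).degree < q.natDegree ∧ w (α j) ≤ 1) ∧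
      (∃ j < J, IsUnit (e j)) ∧
      c⁻¹ • p = ∑ j ∈ Finset.range J, (algebraMap V (Polynomial L) (e j) +
        algebraMap V (Polynomial L) (ε j) * α j) * (d⁻¹ • q) ^ j := by
  obtain ⟨J, b, hb, hpb⟩ := Polynomial.exists_sum_mul_pow_of_monic hq hdeg p
  let S : Submodule K (Polynomial L) := (Polynomial.degreeLT L q.natDegree).restrictScalars K
  have hS : ∀ f, f ∈ S ↔ f.degree < q.natDegree := fun f => by
    rw [Submodule.restrictScalars_mem, Polynomial.mem_degreeLT]
  have hex : ∃ j ∈ Finset.range J, b j ≠ 0 := by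
    by_contra! h
    apply hp
    rw [hpb]
    exact Finset.sum_eq_zero fun j hj => by rw [h j hj, zero_mul]
  obtain ⟨j₁, hj₁, hbj₁⟩ := hex
  have hβ : ∀ j, (d ^ j • b j) ∈ S := fun j => S.smul_mem _ ((hS _).mpr (hb j))
  obtain ⟨j₀, hj₀, hmax⟩ := Finset.exists_max_image (Finset.range J)
    (fun j => w (d ^ j • b j)) ⟨j₁, hj₁⟩
  have hne : w (d ^ j₀ • b j₀) ≠ 0 := by
    refine ne_of_gt (lt_of_lt_of_le (zero_lt_iff.mpr ?_) (hmax j₁ hj₁))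
    rw [Valuation.map_smul_eq]
    exact mul_ne_zero (w.map_algebraMap_ne_zero (pow_ne_zero _ hd))
      fun h => hbj₁ (hind _ (hb _) h)
  obtain ⟨c, hc⟩ := hw.exists_map_eq _ hne
  have hc0 := w.ne_zero_of_map_algebraMap_ne_zero (hc ▸ hne)
  have hval : ∀ j, w (c⁻¹ • d ^ j • b j) = (w (d ^ j₀ • b j₀))⁻¹ * w (d ^ j • b j) := by
    intro j
    rw [Valuation.map_smul_eq, Valuation.map_algebraMap_inv, hc]
  have hsplit : ∀ j, ∃ (e ε : V) (α' : Polynomial L), ε ∈ maximalIdeal V ∧ α' ∈ S ∧ w α' ≤ 1 ∧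
      (j ∈ Finset.range J → c⁻¹ • d ^ j • b j = algebraMap V (Polynomial L) e +
        algebraMap V (Polynomial L) ε * α' ∧ (w (c⁻¹ • d ^ j • b j) = 1 → IsUnit e)) := by
    intro j
    by_cases hj : j ∈ Finset.range J
    · obtain ⟨e, ε, α', h1, h2, h3, h4, h5⟩ := hw.exists_eq_add_smul S
        ((hS 1).mpr (by rw [Polynomial.degree_one]; exact_mod_cast hdeg))
        (fun f hf => hind f ((hS f).mp hf)) (α := c⁻¹ • d ^ j • b j) (S.smul_mem _ (hβ j)) (by
          rw [hval, inv_mul_le_one₀ (zero_lt_iff.mpr hne)]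
          exact hmax j hj)
      exact ⟨e, ε, α', h1, h2, h3, fun _ => ⟨h4, h5⟩⟩
    · exact ⟨0, 0, 0, Ideal.zero_mem _, S.zero_mem, by simp, fun h => absurd h hj⟩
  choose e ε α hε hα hα1 heq using hsplit
  refine ⟨J, c, e, ε, α, hc0, hε, fun j => ⟨(hS _).mp (hα j), hα1 j⟩,
    ⟨j₀, Finset.mem_range.mp hj₀, (heq j₀ hj₀).2 ?_⟩, ?_⟩
  · rw [hval, inv_mul_cancel₀ hne]
  · conv_lhs => rw [hpb, Finset.smul_sum]
    refine Finset.sum_congr rfl fun j hj => ?_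
    rw [← (heq j hj).1, smul_pow, smul_mul_smul_comm, smul_mul_assoc, smul_smul, mul_assoc c⁻¹,
      ← mul_pow, inv_mul_cancel₀ hd, one_pow, mul_one]

/-- Reduction of finitely many polynomials of degree at most `n` to a monic polynomial of degree
`n` and polynomials of smaller degree. -/
theorem Valuation.IsImmediateOver.exists_monic_reduction (hw : w.IsImmediateOver V K)
    {n : ℕ} (hn : 1 ≤ n) (hind : ∀ f : Polynomial L, f.degree < ↑(n + 1) → w f = 0 → f = 0)
    (E : Finset (Polynomial L)) (hE : ∀ f ∈ E, f.degree < ↑(n + 1) ∧ w f ≤ 1) :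
    ∃ (p : Polynomial L) (d : K) (E' : Finset (Polynomial L)), p.Monic ∧ p.natDegree = n ∧
      d ≠ 0 ∧ w (d⁻¹ • p) < 1 ∧ (∀ f ∈ E', f.degree < n ∧ w f ≤ 1) ∧
      ∀ A : Subalgebra V (Polynomial L), d⁻¹ • p ∈ A → (∀ f ∈ E', f ∈ A) → ∀ f ∈ E, f ∈ A := by
  classical
  let S : Finset (Polynomial L) := insert (Polynomial.X ^ n)
    ((E.filter fun f => f.coeff n ≠ 0).image fun f => Polynomial.C (f.coeff n)⁻¹ * f)
  obtain ⟨p₀, hp₀, hmin⟩ := Finset.exists_min_image S w ⟨_, Finset.mem_insert_self _ _⟩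
  have hp₀deg : p₀.Monic ∧ p₀.natDegree = n := by
    rcases Finset.mem_insert.mp hp₀ with rfl | h
    · exact ⟨Polynomial.monic_X_pow n, Polynomial.natDegree_X_pow n⟩
    · obtain ⟨f, hf, rfl⟩ := Finset.mem_image.mp h
      obtain ⟨hfE, hf0⟩ := Finset.mem_filter.mp hf
      have h1 : f.natDegree = n := le_antisymm
        (Nat.lt_succ_iff.mp ((Polynomial.natDegree_lt_iff_degree_lt (by
          rintro rfl
          simp at hf0)).mpr (hE f hfE).1)) (Polynomial.le_natDegree_of_ne_zero hf0)
      refine ⟨?_, ?_⟩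
      · rw [Polynomial.Monic, Polynomial.leadingCoeff_mul, Polynomial.leadingCoeff_C,
          Polynomial.leadingCoeff, h1, inv_mul_cancel₀ hf0]
      · rw [Polynomial.natDegree_C_mul (inv_ne_zero hf0), h1]
  obtain ⟨hmon, hdeg⟩ := hp₀deg
  have hw₀ : w p₀ ≠ 0 := fun h => hmon.ne_zero (hind _ (by
    rw [Polynomial.degree_eq_natDegree hmon.ne_zero, hdeg]
    exact_mod_cast n.lt_succ_self) h)
  obtain ⟨c, hc⟩ := hw.exists_map_eq _ hw₀
  have hc0 := w.ne_zero_of_map_algebraMap_ne_zero (hc ▸ hw₀)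
  have hone : w (c⁻¹ • p₀) = 1 := by
    rw [Valuation.map_smul_eq, Valuation.map_algebraMap_inv, hc, inv_mul_cancel₀ hw₀]
  obtain ⟨a, ha⟩ := hw.exists_sub_lt _ hone.le
  let p : Polynomial L := p₀ - Polynomial.C (algebraMap K L (c * algebraMap V K a))
  have hpc : c⁻¹ • p = c⁻¹ • p₀ - algebraMap V (Polynomial L) a := by
    have h1 : Polynomial.C (algebraMap K L (c * algebraMap V K a)) =
        algebraMap K (Polynomial L) (c * algebraMap V K a) := rfl
    rw [smul_sub, h1, Algebra.smul_def c⁻¹ (algebraMap K (Polynomial L) _), ← map_mul,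
      inv_mul_cancel_left₀ hc0, ← IsScalarTower.algebraMap_apply V K (Polynomial L)]
  have hsmall : w (c⁻¹ • p) < 1 := by
    rw [hpc]
    exact ha
  have hwp : w p ≤ w p₀ := by
    have : w p = w p₀ * w (c⁻¹ • p) := by
      rw [← hc, ← Valuation.map_smul_eq, smul_smul, mul_inv_cancel₀ hc0, one_smul]
    rw [this]
    exact mul_le_of_le_one_right' hsmall.le
  have hCdeg : (Polynomial.C (algebraMap K L (c * algebraMap V K a))).degree < p₀.degree := by
    refine Polynomial.degree_C_le.trans_lt ?_
    rw [Polynomial.degree_eq_natDegree hmon.ne_zero, hdeg]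
    exact_mod_cast hn
  have hpmon : p.Monic := hmon.sub_of_left hCdeg
  have hpdeg : p.natDegree = n := by
    rw [← hdeg]
    exact Polynomial.natDegree_eq_of_degree_eq (Polynomial.degree_sub_eq_left_of_degree_lt hCdeg)
  have hlam : ∀ f ∈ E, w (Polynomial.C (f.coeff n)) * w p₀ ≤ 1 := by
    intro f hf
    by_cases h0 : f.coeff n = 0
    · simp [h0]
    · have h1 := hmin (Polynomial.C (f.coeff n)⁻¹ * f) (Finset.mem_insert_of_mem
        (Finset.mem_image.mpr ⟨f, Finset.mem_filter.mpr ⟨hf, h0⟩, rfl⟩))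
      calc _ ≤ w (Polynomial.C (f.coeff n)) * w (Polynomial.C (f.coeff n)⁻¹ * f) := by gcongr
        _ = w f := by
          rw [← map_mul, ← mul_assoc, ← Polynomial.C_mul, mul_inv_cancel₀ h0, Polynomial.C_1,
            one_mul]
        _ ≤ 1 := (hE f hf).2
  refine ⟨p, c, E.image (fun f => Polynomial.C (f.coeff n * algebraMap K L c)) ∪
    E.image (fun f => f - Polynomial.C (f.coeff n) * p), hpmon, hpdeg, hc0, hsmall, ?_, ?_⟩
  · intro g hg
    rcases Finset.mem_union.mp hg with hg | hg <;> obtain ⟨f, hf, rfl⟩ := Finset.mem_image.mp hg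
    · refine ⟨Polynomial.degree_C_le.trans_lt (by exact_mod_cast hn), ?_⟩
      rw [Polynomial.C_mul, map_mul]
      have : w (Polynomial.C (algebraMap K L c)) = w p₀ := hc
      rw [this]
      exact hlam f hf
    · refine ⟨?_, ?_⟩
      · rw [Polynomial.degree_lt_iff_coeff_zero]
        intro k hk
        rw [Polynomial.coeff_sub, Polynomial.coeff_C_mul]
        rcases hk.eq_or_lt with rfl | hk
        · have : p.coeff n = 1 := by
            rw [← hpdeg]
            exact hpmon
          rw [this, mul_one, sub_self]
        · rw [Polynomial.coeff_eq_zero_of_natDegree_lt (hpdeg.trans_lt hk), mul_zero, sub_zero]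
          exact (Polynomial.degree_lt_iff_coeff_zero _ _).mp (hE f hf).1 k hk
      · refine w.map_sub_le (hE f hf).2 ?_
        rw [map_mul]
        refine le_trans ?_ (hlam f hf)
        gcongr
  · intro A hpA hA f hf
    have h1 := hA _ (Finset.mem_union_left _ (Finset.mem_image_of_mem _ hf))
    have h2 := hA _ (Finset.mem_union_right _ (Finset.mem_image_of_mem _ hf))
    have : f = (f - Polynomial.C (f.coeff n) * p) +
        Polynomial.C (f.coeff n * algebraMap K L c) * (c⁻¹ • p) := by
      have h3 : Polynomial.C (algebraMap K L c) * (c⁻¹ • p) = p := by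
        have h4 : Polynomial.C (algebraMap K L c) = algebraMap K (Polynomial L) c := rfl
        rw [h4, ← Algebra.smul_def, smul_smul, mul_inv_cancel₀ hc0, one_smul]
      rw [Polynomial.C_mul, mul_assoc, h3, sub_add_cancel]
    rw [this]
    exact add_mem h2 (mul_mem h1 hpA)

end Expansion

namespace ResidualPresentation

open MvPolynomial

variable {V Ω : Type*} [CommRing V] [IsLocalRing V] [CommRing Ω] [Algebra V Ω]

theorem exists_common_denominator (P : ResidualPresentation V Ω) (J : ℕ) (α : ℕ → Ω)
    (hα : ∀ j < J, α j ∈ P.loc) :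
    ∃ (s : MvPolynomial P.σ V) (p : ℕ → MvPolynomial P.σ V), IsUnit (constantCoeff s) ∧
      ∀ j < J, aeval P.φ s * α j = aeval P.φ (p j) := by
  induction J with
  | zero => exact ⟨1, 0, by simp, by simp⟩
  | succ J ih =>
    obtain ⟨s, p, hs, hp⟩ := ih fun j hj => hα j (hj.trans J.lt_succ_self)
    obtain ⟨t, g, ht, hg⟩ := mem_loc.mp (hα J J.lt_succ_self)
    refine ⟨s * t, fun j => if j = J then s * g else t * p j, by
      rw [map_mul]
      exact hs.mul ht, fun j hj => ?_⟩
    rcases Nat.lt_succ_iff_lt_or_eq.mp hj with hj | rfl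
    · dsimp only
      rw [if_neg hj.ne, map_mul, map_mul, ← hp j hj]
      ring
    · dsimp only
      rw [if_pos rfl, map_mul, map_mul, ← hg]
      ring

/-- Clearing denominators in an expansion along the powers of a variable. -/
theorem exists_relation_of_expansion (P : ResidualPresentation V Ω) (r : P.σ) (J : ℕ)
    (e ε : ℕ → V) (α : ℕ → Ω) (hε : ∀ j, ε j ∈ maximalIdeal V) (hα : ∀ j < J, α j ∈ P.loc)
    (he : ∃ j < J, IsUnit (e j)) :
    ∃ (s w G : MvPolynomial P.σ V) (a : ℕ), IsUnit (constantCoeff s) ∧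
      IsUnit (constantCoeff w) ∧ G - w * X r ^ a ∈ (maximalIdeal V).map C ∧
      aeval P.φ G = aeval P.φ s * ∑ j ∈ Finset.range J,
        (algebraMap V Ω (e j) + algebraMap V Ω (ε j) * α j) * P.φ r ^ j := by
  classical
  obtain ⟨s, p, hs, hp⟩ := P.exists_common_denominator J α hα
  let a := Nat.find he
  obtain ⟨haJ, hea⟩ : a < J ∧ IsUnit (e a) := Nat.find_spec he
  have hlt : ∀ j < a, e j ∈ maximalIdeal V := fun j hj => by
    rw [mem_maximalIdeal, mem_nonunits_iff]
    exact fun h => Nat.find_min he hj ⟨hj.trans haJ, h⟩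
  refine ⟨s, s * ∑ j ∈ Finset.Ico a J, C (e j) * X r ^ (j - a),
    s * (∑ j ∈ Finset.range J, C (e j) * X r ^ j) +
      ∑ j ∈ Finset.range J, C (ε j) * (p j * X r ^ j), a, hs, ?_, ?_, ?_⟩
  · rw [map_mul]
    refine hs.mul ?_
    rw [map_sum, Finset.sum_eq_single_of_mem a (Finset.left_mem_Ico.mpr haJ)]
    · simpa using hea
    · intro j hj hja
      have : j - a ≠ 0 := by
        have := (Finset.mem_Ico.mp hj).1
        omega
      simp [this]
  · have h1 : (∑ j ∈ Finset.Ico a J, (C (e j) : MvPolynomial P.σ V) * X r ^ (j - a)) * X r ^ a =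
        ∑ j ∈ Finset.Ico a J, C (e j) * X r ^ j := by
      rw [Finset.sum_mul]
      refine Finset.sum_congr rfl fun j hj => ?_
      rw [mul_assoc, ← pow_add, Nat.sub_add_cancel (Finset.mem_Ico.mp hj).1]
    rw [mul_assoc s, h1, ← Finset.sum_range_add_sum_Ico (fun j => C (e j) * X r ^ j) haJ.le]
    have h2 : ∀ A B D : MvPolynomial P.σ V, s * (A + B) + D - s * B = s * A + D := by
      intros
      ring
    rw [h2]
    refine Ideal.add_mem _ (Ideal.mul_mem_left _ _ (Ideal.sum_mem _ fun j hj => ?_))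
      (Ideal.sum_mem _ fun j hj => ?_)
    · exact Ideal.mul_mem_right _ _ (Ideal.mem_map_of_mem _ (hlt j (Finset.mem_range.mp hj)))
    · exact Ideal.mul_mem_right _ _ (Ideal.mem_map_of_mem _ (hε j))
  · rw [map_add, map_mul, map_sum, map_sum, Finset.mul_sum, Finset.mul_sum,
      ← Finset.sum_add_distrib]
    refine Finset.sum_congr rfl fun j hj => ?_
    simp only [map_mul, map_pow, aeval_C, aeval_X]
    rw [← hp j (Finset.mem_range.mp hj)]
    ring

end ResidualPresentation

end

section

open IsLocalRing

namespace ResidualPresentation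

variable {V K L Γ₀ : Type*} [CommRing V] [IsDomain V] [ValuationRing V] [Field K] [Algebra V K]
  [IsFractionRing V K] [Field L] [Algebra V L] [Algebra K L] [IsScalarTower V K L]
  [LinearOrderedCommGroupWithZero Γ₀] {w : Valuation (Polynomial L) Γ₀}

/-- The variable of the polynomial ring and the coefficients of the values are available up to
constants. -/
def HasCoeffs (K : Type*) [Field K] [Algebra V K] [IsFractionRing V K] [Algebra K L]
    [IsScalarTower V K L] (P : ResidualPresentation V (Polynomial L)) : Prop :=
  Polynomial.X ∈ P.locK K ∧ ∀ i k, Polynomial.C ((P.φ i).coeff k) ∈ P.locK K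

/-- Finitely many polynomials of degree less than `n` and value at most one are captured by
presentations having a free variable with value a scalar multiple of a monic polynomial of degree
`m`, which depends only on the given polynomials; polynomials of degree less than `m` may be added
afterwards. -/
def Covers (V K : Type*) [CommRing V] [IsDomain V] [ValuationRing V] [Field K] [Algebra V K]
    [IsFractionRing V K] [Algebra V L] [Algebra K L] [IsScalarTower V K L]
    (w : Valuation (Polynomial L) Γ₀) (m n : ℕ) : Prop :=
  ∀ E : Finset (Polynomial L), (∀ f ∈ E, f.degree < n ∧ w f ≤ 1) →
    ∃ (q : Polynomial L) (d : K), q.Monic ∧ q.natDegree = m ∧ d ≠ 0 ∧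
      ∀ E' : Finset (Polynomial L), (∀ f ∈ E', f.degree < m ∧ w f ≤ 1) →
        ∃ (P : ResidualPresentation V (Polynomial L)) (r : P.σ), P.IsSmall w ∧ r ∉ P.T ∧
          P.φ r = d⁻¹ • q ∧ (∀ f ∈ E, f ∈ P.loc) ∧ (∀ f ∈ E', f ∈ P.loc) ∧ P.HasCoeffs K

/-- Scalar multiples of the coefficients of a polynomial with value at most one. -/
theorem exists_scaled_coeffs (hw : w.IsImmediateOver V K) {n : ℕ} (hn : 1 ≤ n)
    (p : Polynomial L) : ∃ E : Finset (Polynomial L), (∀ f ∈ E, f.degree < n ∧ w f ≤ 1) ∧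
      ∀ P : ResidualPresentation V (Polynomial L), (∀ f ∈ E, f ∈ P.loc) →
        ∀ k, Polynomial.C (p.coeff k) ∈ P.locK K := by
  classical
  choose c hc hc1 using fun k => hw.exists_smul_le_one (Polynomial.C (p.coeff k))
  refine ⟨p.support.image fun k => c k • Polynomial.C (p.coeff k), ?_, ?_⟩
  · intro f hf
    obtain ⟨k, hk, rfl⟩ := Finset.mem_image.mp hf
    refine ⟨?_, hc1 k⟩
    rw [Polynomial.smul_C]
    exact Polynomial.degree_C_le.trans_lt (by exact_mod_cast hn)
  · intro P hP k
    by_cases hk : k ∈ p.support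
    · exact mem_locK_of_smul_mem (hc k)
        (mem_locK_of_mem_loc (hP _ (Finset.mem_image_of_mem _ hk)))
    · rw [Polynomial.notMem_support_iff.mp hk, Polynomial.C_0]
      exact zero_mem _

theorem covers_one_two (hw : w.IsImmediateOver V K)
    (hind : ∀ f : Polynomial L, f.degree < (2 : ℕ) → w f = 0 → f = 0)
    (hL : ∀ E : Finset L, (∀ e ∈ E, w (Polynomial.C e) ≤ 1) →
      ∃ P : ResidualPresentation V L, (∀ i, w (Polynomial.C (P.φ i)) < 1) ∧ ∀ e ∈ E, e ∈ P.loc) :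
    Covers V K w 1 2 := by
  classical
  intro E hE
  obtain ⟨p, d, E', hpm, hpdeg, hd, hsmall, hE', hgen⟩ :=
    hw.exists_monic_reduction le_rfl hind E hE
  refine ⟨p, d, hpm, hpdeg, hd, fun E'' hE'' => ?_⟩
  obtain ⟨E₁, hE₁, hcoeff⟩ := exists_scaled_coeffs hw le_rfl p
  have hconst : ∀ f ∈ E' ∪ E'' ∪ E₁, Polynomial.C (f.coeff 0) = f ∧ w f ≤ 1 := by
    intro f hf
    have h : f.degree < (1 : ℕ) ∧ w f ≤ 1 := by
      rcases Finset.mem_union.mp hf with hf | hf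
      · rcases Finset.mem_union.mp hf with hf | hf
        · exact hE' f hf
        · exact hE'' f hf
      · exact hE₁ f hf
    refine ⟨?_, h.2⟩
    refine (Polynomial.eq_C_of_degree_le_zero ?_).symm
    exact Nat.WithBot.lt_one_iff_le_zero.mp (by simpa using h.1)
  obtain ⟨P, hPs, hP⟩ := hL ((E' ∪ E'' ∪ E₁).image fun f => f.coeff 0) (by
    intro e he
    obtain ⟨f, hf, rfl⟩ := Finset.mem_image.mp he
    rw [(hconst f hf).1]
    exact (hconst f hf).2)
  have hy : (d⁻¹ • p).natDegree = 1 := by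
    rw [Polynomial.natDegree_smul p (inv_ne_zero hd), hpdeg]
  let Q := P.adjoinFree (d⁻¹ • p) hy
  have hQ : ∀ f ∈ E' ∪ E'' ∪ E₁, f ∈ Q.loc := by
    intro f hf
    rw [← (hconst f hf).1]
    exact C_mem_loc_adjoinFree P _ hy (hP _ (Finset.mem_image_of_mem _ hf))
  have hyQ : d⁻¹ • p ∈ Q.loc := Q.φ_mem_loc (none : Option P.σ)
  have hcp := hcoeff Q fun f hf => hQ f (Finset.mem_union_right _ hf)
  refine ⟨Q, (none : Option P.σ), ?_, ?_, rfl, ?_, ?_, ?_, ?_⟩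
  · rintro (_ | i)
    · exact hsmall
    · exact hPs i
  · rintro ⟨i, _, hi⟩
    exact Option.some_ne_none i hi
  · exact hgen _ hyQ fun f hf =>
      hQ f (Finset.mem_union_left _ (Finset.mem_union_left _ hf))
  · exact fun f hf => hQ f (Finset.mem_union_left _ (Finset.mem_union_right _ hf))
  · have h1 : Polynomial.X = p - Polynomial.C (p.coeff 0) := by
      have := Polynomial.eq_X_add_C_of_natDegree_le_one hpdeg.le
      have h2 : p.coeff 1 = 1 := by
        rw [← hpdeg]
        exact hpm
      rw [h2, Polynomial.C_1, one_mul] at this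
      exact eq_sub_of_add_eq this.symm
    rw [h1]
    refine sub_mem (mem_locK_of_smul_mem (inv_ne_zero hd) (mem_locK_of_mem_loc hyQ)) (hcp 0)
  · rintro (_ | i) k
    · change Polynomial.C ((d⁻¹ • p).coeff k) ∈ Q.locK K
      rw [Polynomial.coeff_smul, ← Polynomial.smul_C]
      exact (Q.locK K).smul_mem (hcp k) _
    · change Polynomial.C ((Polynomial.C (P.φ i)).coeff k) ∈ Q.locK K
      rw [Polynomial.coeff_C]
      split_ifs
      · exact mem_locK_of_mem_loc (Q.φ_mem_loc (some i : Option P.σ))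
      · rw [Polynomial.C_0]
        exact zero_mem _

theorem Covers.succ_or (hw : w.IsImmediateOver V K) {m n : ℕ} (hm : 1 ≤ m) (hmn : m < n)
    (hind : ∀ f : Polynomial L, f.degree < ↑(n + 1) → w f = 0 → f = 0)
    (h : Covers V K w m n) : Covers V K w m (n + 1) ∨ Covers V K w n (n + 1) := by
  classical
  refine or_iff_not_imp_left.mpr fun hnot => ?_
  rw [Covers] at hnot
  push Not at hnot
  obtain ⟨E₁, hE₁, hnot⟩ := hnot
  intro E hE
  obtain ⟨p, d, E', hpm, hpdeg, hd, hsmall, hE', hgen⟩ :=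
    hw.exists_monic_reduction (hm.trans hmn.le) hind (E ∪ E₁) (by
      intro f hf
      rcases Finset.mem_union.mp hf with hf | hf
      · exact hE f hf
      · exact hE₁ f hf)
  refine ⟨p, d, hpm, hpdeg, hd, fun E'' hE'' => ?_⟩
  obtain ⟨E₂, hE₂, hcoeff⟩ := exists_scaled_coeffs hw (hm.trans hmn.le) p
  obtain ⟨q, dq, hqm, hqdeg, hdq, hq⟩ := h (E' ∪ E'' ∪ E₂) (by
    intro f hf
    rcases Finset.mem_union.mp hf with hf | hf
    · rcases Finset.mem_union.mp hf with hf | hf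
      · exact hE' f hf
      · exact hE'' f hf
    · exact hE₂ f hf)
  obtain ⟨E₃, hE₃, hnot⟩ := hnot q dq hqm hqdeg hdq
  obtain ⟨J, c, e, ε, α, hc, hε, hα, he, hexp⟩ := hw.exists_expansion hqm (hqdeg ▸ hm) hdq
    (fun f hf => hind f (hf.trans (by rw [hqdeg]; exact_mod_cast hmn.trans n.lt_succ_self)))
    hpm.ne_zero
  obtain ⟨P, r, hPs, hr, hφr, hP, hP', hPc⟩ := hq ((Finset.range J).image α ∪ E₃) (by
    intro f hf
    rcases Finset.mem_union.mp hf with hf | hf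
    · obtain ⟨j, _, rfl⟩ := Finset.mem_image.mp hf
      rw [← hqdeg]
      exact hα j
    · exact hE₃ f hf)
  obtain ⟨s, u, G, a, hs, hu, hG, haG⟩ := P.exists_relation_of_expansion r J e ε α hε
    (fun j hj => hP' _ (Finset.mem_union_left _
      (Finset.mem_image_of_mem _ (Finset.mem_range.mpr hj)))) he
  rw [hφr, ← hexp] at haG
  have hPE' : ∀ f ∈ E', f ∈ P.loc := fun f hf =>
    hP f (Finset.mem_union_left _ (Finset.mem_union_left _ hf))
  rcases le_or_gt (w (algebraMap K (Polynomial L) c)) (w (algebraMap K (Polynomial L) d)) with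
    hcd | hcd
  · exfalso
    obtain ⟨t, ht⟩ := hw.exists_algebraMap_eq (c := d⁻¹ * c) (by
      rw [map_mul, map_mul, Valuation.map_algebraMap_inv,
        inv_mul_le_one₀ (zero_lt_iff.mpr (w.map_algebraMap_ne_zero hd))]
      exact hcd)
    have hcp : c⁻¹ • p ∈ P.loc := mem_loc.mpr ⟨s, G, hs, haG.symm⟩
    have hdp : d⁻¹ • p ∈ P.loc := by
      have := P.loc.smul_mem hcp t
      rwa [← algebraMap_smul K t, ht, smul_smul, mul_assoc, mul_inv_cancel₀ hc, mul_one] at this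
    have hall := hgen P.loc hdp hPE'
    exact hnot P r hPs hr hφr (fun f hf => hall f (Finset.mem_union_right _ hf))
      (fun f hf => hP' f (Finset.mem_union_right _ hf)) hPc
  · have hlt : w (algebraMap K (Polynomial L) (d * c⁻¹)) < 1 := by
      rw [map_mul, map_mul, Valuation.map_algebraMap_inv, ← div_eq_mul_inv,
        div_lt_one₀ (zero_lt_iff.mpr (w.map_algebraMap_ne_zero hc))]
      exact hcd
    obtain ⟨t, ht⟩ := hw.exists_algebraMap_eq hlt.le
    have htm : t ∈ maximalIdeal V := by
      rw [← hw.map_lt_one_iff, IsScalarTower.algebraMap_apply V K (Polynomial L), ht]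
      exact hlt
    have ht0 : t ≠ 0 := by
      rintro rfl
      rw [map_zero] at ht
      exact mul_ne_zero hd (inv_ne_zero hc) ht.symm
    have hy : MvPolynomial.aeval P.φ (s * MvPolynomial.C t) * (d⁻¹ • p) =
        MvPolynomial.aeval P.φ G := by
      rw [haG, map_mul, MvPolynomial.aeval_C, mul_assoc,
        IsScalarTower.algebraMap_apply V K (Polynomial L), ht, ← Algebra.smul_def, smul_smul,
        mul_right_comm, mul_inv_cancel₀ hd, one_mul]
    let Q := P.adjoinFraction hr s G u t a (d⁻¹ • p) hs hu htm ht0 hG hy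
    have hPQ : P.loc ≤ Q.loc := P.loc_le_adjoinFraction hr s G u t a (d⁻¹ • p) hs hu htm ht0 hG hy
    have hyQ : d⁻¹ • p ∈ Q.loc := Q.φ_mem_loc (none : Option P.σ)
    refine ⟨Q, (none : Option P.σ), ?_, ?_, rfl, ?_, ?_, ?_, ?_⟩
    · rintro (_ | i)
      · exact hsmall
      · exact hPs i
    · rintro ⟨i, _, hi⟩
      exact Option.some_ne_none i hi
    · exact fun f hf => hgen Q.loc hyQ (fun f hf => hPQ (hPE' f hf)) f
        (Finset.mem_union_left _ hf)
    · exact fun f hf => hPQ (hP f (Finset.mem_union_left _ (Finset.mem_union_right _ hf)))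
    · exact locK_mono hPQ hPc.1
    · rintro (_ | i) k
      · change Polynomial.C ((d⁻¹ • p).coeff k) ∈ Q.locK K
        rw [Polynomial.coeff_smul, ← Polynomial.smul_C]
        exact (Q.locK K).smul_mem
          (locK_mono hPQ (hcoeff P (fun f hf => hP f (Finset.mem_union_right _ hf)) k)) _
      · exact locK_mono hPQ (hPc.2 i k)

theorem exists_covers (hw : w.IsImmediateOver V K)
    (hL : ∀ E : Finset L, (∀ e ∈ E, w (Polynomial.C e) ≤ 1) →
      ∃ P : ResidualPresentation V L, (∀ i, w (Polynomial.C (P.φ i)) < 1) ∧ ∀ e ∈ E, e ∈ P.loc)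
    (n : ℕ) (hn : 2 ≤ n) (hind : ∀ f : Polynomial L, f.degree < n → w f = 0 → f = 0) :
    ∃ m, 1 ≤ m ∧ m < n ∧ Covers V K w m n := by
  induction n, hn using Nat.le_induction with
  | base => exact ⟨1, le_rfl, one_lt_two, covers_one_two hw hind hL⟩
  | succ n hn ih =>
    obtain ⟨m, hm, hmn, h⟩ := ih fun f hf => hind f
      (hf.trans (by exact_mod_cast n.lt_succ_self))
    rcases h.succ_or hw hm hmn hind with h | h
    · exact ⟨m, hm, hmn.trans n.lt_succ_self, h⟩
    · exact ⟨n, hm.trans hmn.le, n.lt_succ_self, h⟩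

end ResidualPresentation

end

section

open IsLocalRing

namespace ResidualPresentation

section Quotient

variable {V K L : Type*} [CommRing V] [IsDomain V] [ValuationRing V] [Field K] [Algebra V K]
  [IsFractionRing V K] [Field L] [Algebra V L] [Algebra K L] [IsScalarTower V K L]

theorem HasCoeffs.mem_locK_of_mul_eq {P : ResidualPresentation V (Polynomial L)}
    (hP : P.HasCoeffs K) {F b : Polynomial L} (hF : F.Monic)
    (hFc : ∀ k, Polynomial.C (F.coeff k) ∈ P.locK K) (p : MvPolynomial P.σ V)
    (hb : F * b = MvPolynomial.aeval P.φ p) : b ∈ P.locK K := by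
  let R : Subring L := (P.locK K).toSubring.comap Polynomial.C
  have hlift : ∀ f : Polynomial L, (∀ k, Polynomial.C (f.coeff k) ∈ P.locK K) →
      f ∈ Polynomial.lifts R.subtype := by
    intro f hf
    rw [Polynomial.lifts_iff_coeff_lifts]
    exact fun k => ⟨⟨f.coeff k, hf k⟩, rfl⟩
  have hp : ∀ p : MvPolynomial P.σ V, MvPolynomial.aeval P.φ p ∈ Polynomial.lifts R.subtype := by
    intro p
    induction p using MvPolynomial.induction_on with
    | C a =>
      rw [MvPolynomial.aeval_C]
      refine hlift _ fun k => ?_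
      have h1 : algebraMap V (Polynomial L) a = Polynomial.C (algebraMap V L a) := rfl
      rw [h1, Polynomial.coeff_C]
      split_ifs
      · exact mem_locK_of_mem_loc (P.loc.algebraMap_mem a)
      · rw [Polynomial.C_0]
        exact zero_mem _
    | add p q hp hq =>
      rw [map_add]
      exact add_mem hp hq
    | mul_X p i hp =>
      rw [map_mul, MvPolynomial.aeval_X]
      exact mul_mem hp (hlift _ (hP.2 i))
  obtain ⟨p₀, hp₀⟩ := Polynomial.mem_lifts _ |>.mp (hp p)
  obtain ⟨F₀, hF₀, -, hF₀m⟩ := Polynomial.lifts_and_degree_eq_and_monic (hlift F hFc) hF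
  have hbq : b = (p₀ /ₘ F₀).map R.subtype := by
    rw [Polynomial.map_divByMonic _ hF₀m, hp₀, hF₀, ← hb,
      Polynomial.mul_divByMonic_cancel_left _ hF]
  rw [hbq, Polynomial.map, Polynomial.eval₂_eq_sum, Polynomial.sum]
  refine sum_mem fun k _ => mul_mem ?_ (pow_mem hP.1 k)
  exact ((p₀ /ₘ F₀).coeff k).2

end Quotient

section SimpleExtension

open IntermediateField

variable {V K L K' Γ₀ : Type*} [CommRing V] [IsDomain V] [ValuationRing V] [Field K] [Algebra V K]
  [IsFractionRing V K] [Field L] [Algebra V L] [Algebra K L] [IsScalarTower V K L]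
  [Field K'] [Algebra V K'] [Algebra K K'] [Algebra L K'] [IsScalarTower V K K']
  [IsScalarTower V L K'] [IsScalarTower K L K']
  [LinearOrderedCommGroupWithZero Γ₀] {v : Valuation K' Γ₀}

theorem exists_small_adjoin_of_transcendental (hv : v.IsImmediateOver V K)
    (hL : ∀ E : Finset L, (∀ e ∈ E, v (algebraMap L K' e) ≤ 1) →
      ∃ P : ResidualPresentation V L, (∀ i, v (algebraMap L K' (P.φ i)) < 1) ∧ ∀ e ∈ E, e ∈ P.loc)
    {x : K'} (hx : Transcendental L x) (E : Finset K')
    (hE : ∀ z ∈ E, z ∈ L⟮x⟯ ∧ v z ≤ 1) :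
    ∃ P : ResidualPresentation V K', P.IsSmall v ∧ (∀ i, P.φ i ∈ L⟮x⟯) ∧ ∀ z ∈ E, z ∈ P.loc := by
  classical
  let ev : Polynomial L →ₐ[K] K' := (Polynomial.aeval x).restrictScalars K
  let evV : Polynomial L →ₐ[V] K' := (Polynomial.aeval x).restrictScalars V
  let w : Valuation (Polynomial L) Γ₀ := v.comap (ev : Polynomial L →+* K')
  have hw : w.IsImmediateOver V K := hv.comap ev
  have hwf : ∀ f, w f = v (Polynomial.aeval x f) := fun _ => rfl
  have hwC : ∀ e : L, w (Polynomial.C e) = v (algebraMap L K' e) := fun e => by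
    rw [hwf, Polynomial.aeval_C]
  have hinj : Function.Injective (Polynomial.aeval x : Polynomial L →ₐ[L] K') :=
    transcendental_iff_injective.mp hx
  have hind : ∀ f, w f = 0 → f = 0 := fun f hf =>
    (map_eq_zero_iff _ hinj).mp ((v.zero_iff).mp hf)
  have hfrac : ∀ z : K', ∃ f u : Polynomial L, z ∈ E →
      w u = 1 ∧ w f ≤ 1 ∧ Polynomial.aeval x u * z = Polynomial.aeval x f := by
    intro z
    by_cases hz : z ∈ E
    · obtain ⟨f, g, hfg⟩ := (IntermediateField.mem_adjoin_simple_iff L z).mp (hE z hz).1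
      by_cases hg : Polynomial.aeval x g = 0
      · refine ⟨0, 1, fun _ => ⟨map_one w, by simp, ?_⟩⟩
        rw [hfg, hg, div_zero, mul_zero, map_zero]
      · have hg0 : w g ≠ 0 := (v.ne_zero_iff).mpr hg
        obtain ⟨c, hc⟩ := hw.exists_map_eq g hg0
        have h1 : w (c⁻¹ • g) = 1 := by
          rw [Valuation.map_smul_eq, Valuation.map_algebraMap_inv, hc, inv_mul_cancel₀ hg0]
        have h2 : ev (c⁻¹ • g) * z = ev (c⁻¹ • f) := by
          rw [map_smul, map_smul, smul_mul_assoc, hfg]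
          congr 1
          exact mul_div_cancel₀ _ hg
        refine ⟨c⁻¹ • f, c⁻¹ • g, fun _ => ⟨h1, ?_, h2⟩⟩
        have h3 : w (c⁻¹ • f) = w (c⁻¹ • g) * v z := by
          change v (ev _) = v (ev _) * v z
          rw [← h2, map_mul]
        rw [h3, h1, one_mul]
        exact (hE z hz).2
    · exact ⟨0, 0, fun h => absurd h hz⟩
  choose f u hfu using hfrac
  let E₀ : Finset (Polynomial L) := E.image f ∪ E.image u
  let n : ℕ := E₀.sup Polynomial.natDegree + 2
  obtain ⟨m, -, -, hcov⟩ := exists_covers hw (by simpa only [hwC] using hL) n (by omega)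
    fun f _ => hind f
  obtain ⟨q, d, -, -, -, hq⟩ := hcov E₀ (by
    intro g hg
    refine ⟨Polynomial.degree_le_natDegree.trans_lt ?_, ?_⟩
    · have : g.natDegree ≤ E₀.sup Polynomial.natDegree := Finset.le_sup hg
      exact_mod_cast this.trans_lt (by omega)
    · rcases Finset.mem_union.mp hg with hg | hg <;> obtain ⟨z, hz, rfl⟩ := Finset.mem_image.mp hg
      · exact (hfu z hz).2.1
      · exact (hfu z hz).1.le)
  obtain ⟨P, -, hPs, -, -, hP, -, -⟩ := hq ∅ (by simp)
  have htr : ∀ p : MvPolynomial P.σ V,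
      MvPolynomial.aeval (fun i => evV (P.φ i)) p = 0 ↔ MvPolynomial.aeval P.φ p = 0 := fun p => by
    rw [← MvPolynomial.comp_aeval_apply]
    exact map_eq_zero_iff _ hinj
  have hsm : (P.transport _ htr).IsSmall v := fun i => hPs i
  refine ⟨P.transport _ htr, hsm, fun i => ?_, fun z hz => ?_⟩
  · exact (IntermediateField.algebra_adjoin_le_adjoin L {x})
      (Polynomial.aeval_mem_adjoin_singleton L x)
  · exact hsm.mem_loc_of_mul_eq hv
      (P.mem_loc_transport evV htr (hP _ (Finset.mem_union_right _ (Finset.mem_image_of_mem u hz))))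
      (hfu z hz).1
      (P.mem_loc_transport evV htr (hP _ (Finset.mem_union_left _ (Finset.mem_image_of_mem f hz))))
      (hfu z hz).2.2

theorem exists_small_adjoin_of_isAlgebraic (hv : v.IsImmediateOver V K)
    (hL : ∀ E : Finset L, (∀ e ∈ E, v (algebraMap L K' e) ≤ 1) →
      ∃ P : ResidualPresentation V L, (∀ i, v (algebraMap L K' (P.φ i)) < 1) ∧ ∀ e ∈ E, e ∈ P.loc)
    {x : K'} (hx : IsAlgebraic L x) (E : Finset K')
    (hE : ∀ z ∈ E, z ∈ L⟮x⟯ ∧ v z ≤ 1) :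
    ∃ P : ResidualPresentation V K', P.IsSmall v ∧ (∀ i, P.φ i ∈ L⟮x⟯) ∧ ∀ z ∈ E, z ∈ P.loc := by
  classical
  let ev : Polynomial L →ₐ[K] K' := (Polynomial.aeval x).restrictScalars K
  let evV : Polynomial L →ₐ[V] K' := (Polynomial.aeval x).restrictScalars V
  let w : Valuation (Polynomial L) Γ₀ := v.comap (ev : Polynomial L →+* K')
  have hw : w.IsImmediateOver V K := hv.comap ev
  have hwf : ∀ f, w f = v (Polynomial.aeval x f) := fun _ => rfl
  have hwC : ∀ e : L, w (Polynomial.C e) = v (algebraMap L K' e) := fun e => by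
    rw [hwf, Polynomial.aeval_C]
  have hxi : IsIntegral L x := hx.isIntegral
  let F : Polynomial L := minpoly L x
  have hF : F.Monic := minpoly.monic hxi
  have hFdeg : F.degree = F.natDegree := Polynomial.degree_eq_natDegree hF.ne_zero
  have hind : ∀ f : Polynomial L, f.degree < F.natDegree → w f = 0 → f = 0 := by
    intro f hf h0
    by_contra hne
    have := minpoly.degree_le_of_ne_zero L x hne ((v.zero_iff).mp h0)
    exact absurd (this.trans_lt hf) (by rw [← hFdeg]; exact lt_irrefl _)
  have hpoly : ∀ z : K', ∃ f : Polynomial L, z ∈ E →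
      f.degree < F.natDegree ∧ Polynomial.aeval x f = z := by
    intro z
    by_cases hz : z ∈ E
    · have h1 : z ∈ Algebra.adjoin L {x} := by
        rw [← IntermediateField.adjoin_simple_toSubalgebra_of_isAlgebraic hx]
        exact (hE z hz).1
      rw [Algebra.adjoin_singleton_eq_range_aeval] at h1
      obtain ⟨f, hf⟩ := h1
      refine ⟨f %ₘ F, fun _ => ⟨hFdeg ▸ Polynomial.degree_modByMonic_lt f hF, ?_⟩⟩
      rw [minpoly.aeval_modByMonic_minpoly]
      exact hf
    · exact ⟨0, fun h => absurd h hz⟩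
  choose f hf using hpoly
  by_cases hN : 2 ≤ F.natDegree
  · obtain ⟨m, hm, hmN, hcov⟩ := exists_covers hw (by simpa only [hwC] using hL) F.natDegree hN hind
    obtain ⟨E₁, hE₁, hcoeff⟩ := exists_scaled_coeffs hw (one_le_two.trans hN) F
    obtain ⟨q, d, hqm, hqdeg, hd, hq⟩ := hcov (E.image f ∪ E₁) (by
      intro g hg
      rcases Finset.mem_union.mp hg with hg | hg
      · obtain ⟨z, hz, rfl⟩ := Finset.mem_image.mp hg
        refine ⟨(hf z hz).1, ?_⟩
        rw [hwf, (hf z hz).2]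
        exact (hE z hz).2
      · exact hE₁ g hg)
    obtain ⟨J, c, e, ε, α, hc, hε, hα, he, hexp⟩ := hw.exists_expansion hqm (hqdeg ▸ hm) hd
      (fun f hf => hind f (hf.trans (by rw [hqdeg]; exact_mod_cast hmN))) hF.ne_zero
    obtain ⟨P, r, hPs, hr, hφr, hP, hP', hPc⟩ := hq ((Finset.range J).image α) (by
      intro g hg
      obtain ⟨j, _, rfl⟩ := Finset.mem_image.mp hg
      rw [← hqdeg]
      exact hα j)
    obtain ⟨s, u, G, a, hs, hu, hG, haG⟩ := P.exists_relation_of_expansion r J e ε α hε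
      (fun j hj => hP' _ (Finset.mem_image_of_mem _ (Finset.mem_range.mpr hj))) he
    rw [hφr, ← hexp] at haG
    have hFc := hcoeff P fun f hf => hP f (Finset.mem_union_right _ hf)
    have haev : ∀ p : MvPolynomial P.σ V, MvPolynomial.aeval (fun i => evV (P.φ i)) p =
        evV (MvPolynomial.aeval P.φ p) := fun p => (MvPolynomial.comp_aeval_apply _ _ _).symm
    have hψ : ∀ p : MvPolynomial P.σ V, MvPolynomial.aeval P.φ p = 0 →
        MvPolynomial.aeval (fun i => evV (P.φ i)) p = 0 := fun p hp => by
      rw [haev, hp, map_zero]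
    have hψG : MvPolynomial.aeval (fun i => evV (P.φ i)) G = 0 := by
      rw [haev, haG, map_mul]
      have : evV (c⁻¹ • F) = 0 := by
        change ev (c⁻¹ • F) = 0
        rw [map_smul]
        change c⁻¹ • Polynomial.aeval x F = 0
        rw [minpoly.aeval, smul_zero]
      rw [this, mul_zero]
    have hgen : ∀ p : MvPolynomial P.σ V, MvPolynomial.aeval (fun i => evV (P.φ i)) p = 0 →
        ∃ (s : MvPolynomial P.σ V) (d : V) (q : MvPolynomial P.σ V),
          IsUnit (MvPolynomial.constantCoeff s) ∧ d ≠ 0 ∧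
          s * MvPolynomial.C d * p - G * q ∈ Ideal.span (P.h '' P.T) := by
      intro p hp
      rw [haev] at hp
      obtain ⟨b, hb⟩ := minpoly.dvd L x hp
      obtain ⟨d₀, hd₀, hb₀⟩ := mem_locK.mp (hPc.mem_locK_of_mul_eq hF hFc p hb.symm)
      obtain ⟨s₁, q₁, hs₁, hq₁⟩ := mem_loc.mp hb₀
      obtain ⟨c₁, c₂, hc₂, hcc⟩ := IsFractionRing.div_surjective (A := V) c
      have hc₂0 : algebraMap V K c₂ ≠ 0 :=
        IsFractionRing.to_map_ne_zero_of_mem_nonZeroDivisors hc₂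
      have hFG : algebraMap V (Polynomial L) c₂ * (MvPolynomial.aeval P.φ s * F) =
          algebraMap V (Polynomial L) c₁ * MvPolynomial.aeval P.φ G := by
        rw [haG, mul_left_comm, mul_left_comm (algebraMap V (Polynomial L) c₁)]
        congr 1
        rw [IsScalarTower.algebraMap_apply V K (Polynomial L), ← Algebra.smul_def,
          IsScalarTower.algebraMap_apply V K (Polynomial L), ← Algebra.smul_def, smul_smul, ← hcc,
          inv_div, mul_div_cancel₀]
        rintro h0
        rw [h0, zero_div] at hcc
        exact hc hcc.symm
      obtain ⟨s₂, d₂, hs₂, hd₂, hmem⟩ := P.generic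
        (s * s₁ * MvPolynomial.C (d₀ * c₂) * p - G * (MvPolynomial.C c₁ * q₁)) (by
          simp only [map_sub, map_mul, MvPolynomial.aeval_C]
          rw [← hq₁, hb, sub_eq_zero]
          linear_combination (MvPolynomial.aeval P.φ s₁ * algebraMap V (Polynomial L) d₀ * b) * hFG)
      refine ⟨s₂ * s * s₁, d₂ * (d₀ * c₂), s₂ * MvPolynomial.C d₂ * (MvPolynomial.C c₁ * q₁), ?_,
        mul_ne_zero hd₂ (mul_ne_zero hd₀ (nonZeroDivisors.ne_zero hc₂)), ?_⟩
      · rw [map_mul, map_mul]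
        exact (hs₂.mul hs).mul hs₁
      · convert hmem using 1
        rw [MvPolynomial.C_mul (a := d₂)]
        ring
    refine ⟨P.adjoinRelation (fun i => evV (P.φ i)) hr G u a hu hG hψ hψG hgen,
      fun i => hPs i, fun i => ?_, fun z hz => ?_⟩
    · exact (IntermediateField.algebra_adjoin_le_adjoin L {x})
        (Polynomial.aeval_mem_adjoin_singleton L x)
    · have := P.mem_loc_adjoinRelation evV hr G u a hu hG hψ hψG hgen
        (hP _ (Finset.mem_union_left _ (Finset.mem_image_of_mem f hz)))
      rwa [show evV (f z) = z from (hf z hz).2] at this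
  · have hconst : ∀ z ∈ E, algebraMap L K' ((f z).coeff 0) = z := by
      intro z hz
      have h1 : (f z).degree ≤ 0 := by
        refine Nat.WithBot.lt_one_iff_le_zero.mp ((hf z hz).1.trans_le ?_)
        exact_mod_cast (by omega : F.natDegree ≤ 1)
      have h2 := (hf z hz).2
      rwa [Polynomial.eq_C_of_degree_le_zero h1, Polynomial.aeval_C] at h2
    obtain ⟨P, hPs, hP⟩ := hL (E.image fun z => (f z).coeff 0) (by
      intro e he
      obtain ⟨z, hz, rfl⟩ := Finset.mem_image.mp he
      rw [hconst z hz]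
      exact (hE z hz).2)
    let g : L →ₐ[V] K' := IsScalarTower.toAlgHom V L K'
    have htr : ∀ p : MvPolynomial P.σ V,
        MvPolynomial.aeval (fun i => g (P.φ i)) p = 0 ↔ MvPolynomial.aeval P.φ p = 0 := fun p => by
      rw [← MvPolynomial.comp_aeval_apply]
      exact map_eq_zero_iff _ (algebraMap L K').injective
    refine ⟨P.transport _ htr, fun i => hPs i, fun i => L⟮x⟯.algebraMap_mem _, fun z hz => ?_⟩
    have := P.mem_loc_transport g htr (hP _ (Finset.mem_image_of_mem _ hz))
    rwa [show g ((f z).coeff 0) = z from hconst z hz] at this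

end SimpleExtension

end ResidualPresentation

end

section Pullback

namespace ResidualPresentation

open MvPolynomial IsLocalRing

variable {V Ω Ω' : Type*} [CommRing V] [IsLocalRing V] [CommRing Ω'] [Algebra V Ω']
  [CommRing Ω] [Algebra V Ω]

/-- Values of a presentation lying in a subring can be viewed as elements of that subring. -/
theorem exists_comap (P : ResidualPresentation V Ω') (f : Ω →ₐ[V] Ω') (hf : Function.Injective f)
    (hφ : ∀ i, ∃ y, f y = P.φ i) : ∃ Q : ResidualPresentation V Ω,
      (∀ j, ∃ i, f (Q.φ j) = P.φ i) ∧ ∀ x, f x ∈ P.loc → x ∈ Q.loc := by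
  choose ψ hψ using hφ
  have hcomp : ∀ p : MvPolynomial P.σ V, f (aeval ψ p) = aeval P.φ p := by
    intro p
    rw [comp_aeval_apply, funext hψ]
  refine ⟨P.transport ψ fun p => ?_, fun j => ⟨j, hψ j⟩, ?_⟩
  · rw [← hcomp, map_eq_zero_iff f hf]
  · rintro x ⟨s, p, hs, hx⟩
    refine ⟨s, p, hs, hf ?_⟩
    change f (aeval ψ s * x) = f (aeval ψ p)
    rw [map_mul, hcomp, hcomp, hx]

/-- The presentation without variables. -/
noncomputable def trivial (hinj : Function.Injective (algebraMap V Ω)) :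
    ResidualPresentation V Ω where
  σ := Empty
  φ := Empty.elim
  T := ∅
  h := Empty.elim
  w := Empty.elim
  e := Empty.elim
  isUnit_w i := i.elim
  residual i := i.elim
  aeval_h i := i.elim
  generic p hp := by
    refine ⟨1, 1, by simp, one_ne_zero, ?_⟩
    obtain ⟨a, rfl⟩ := C_surjective Empty p
    rw [aeval_C, map_eq_zero_iff _ hinj] at hp
    simp [hp]

end ResidualPresentation

end Pullback

section FieldTower

namespace ResidualPresentation

open IntermediateField

variable {V K K' Γ₀ : Type*} [CommRing V] [IsDomain V] [ValuationRing V] [Field K] [Algebra V K]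
  [IsFractionRing V K] [Field K'] [Algebra V K'] [Algebra K K'] [IsScalarTower V K K']
  [LinearOrderedCommGroupWithZero Γ₀] {v : Valuation K' Γ₀}

theorem exists_small_bot (hv : v.IsImmediateOver V K) (E : Finset K')
    (hE : ∀ z ∈ E, z ∈ (⊥ : IntermediateField K K') ∧ v z ≤ 1) :
    ∃ P : ResidualPresentation V K', P.IsSmall v ∧
      (∀ i, P.φ i ∈ (⊥ : IntermediateField K K')) ∧ ∀ z ∈ E, z ∈ P.loc := by
  have hinj : Function.Injective (algebraMap V K') := by
    rw [IsScalarTower.algebraMap_eq V K K', RingHom.coe_comp]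
    exact (algebraMap K K').injective.comp (IsFractionRing.injective V K)
  refine ⟨trivial hinj, fun i => i.elim, fun i => i.elim, fun z hz => ?_⟩
  obtain ⟨hz, hvz⟩ := hE z hz
  obtain ⟨c, rfl⟩ := IntermediateField.mem_bot.mp hz
  obtain ⟨a, rfl⟩ := hv.exists_algebraMap_eq hvz
  rw [← IsScalarTower.algebraMap_apply]
  exact Subalgebra.algebraMap_mem _ _

theorem exists_small_adjoin (hv : v.IsImmediateOver V K) (S E : Finset K')
    (hE : ∀ z ∈ E, z ∈ adjoin K (S : Set K') ∧ v z ≤ 1) :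
    ∃ P : ResidualPresentation V K', P.IsSmall v ∧ ∀ z ∈ E, z ∈ P.loc := by
  classical
  have key : ∀ E : Finset K', (∀ z ∈ E, z ∈ adjoin K (S : Set K') ∧ v z ≤ 1) →
      ∃ P : ResidualPresentation V K', P.IsSmall v ∧
        (∀ i, P.φ i ∈ adjoin K (S : Set K')) ∧ ∀ z ∈ E, z ∈ P.loc := by
    refine induction_on_adjoin_finset S (fun L => ∀ E : Finset K', (∀ z ∈ E, z ∈ L ∧ v z ≤ 1) →
      ∃ P : ResidualPresentation V K', P.IsSmall v ∧ (∀ i, P.φ i ∈ L) ∧ ∀ z ∈ E, z ∈ P.loc)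
      (exists_small_bot hv) ?_
    intro L x _ hL E hE
    have : IsScalarTower V L K' := IsScalarTower.of_algebraMap_eq fun _ => rfl
    have hL' : ∀ E : Finset L, (∀ e ∈ E, v (algebraMap L K' e) ≤ 1) →
        ∃ P : ResidualPresentation V L,
          (∀ i, v (algebraMap L K' (P.φ i)) < 1) ∧ ∀ e ∈ E, e ∈ P.loc := by
      intro E hE
      obtain ⟨P, hP, hPL, hPE⟩ := hL (E.image (algebraMap L K')) (by
        intro z hz
        obtain ⟨e, he, rfl⟩ := Finset.mem_image.mp hz
        exact ⟨e.2, hE e he⟩)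
      obtain ⟨Q, hQ, hQloc⟩ := P.exists_comap (IsScalarTower.toAlgHom V L K')
        (algebraMap L K').injective fun i => ⟨⟨P.φ i, hPL i⟩, rfl⟩
      refine ⟨Q, fun j => ?_, fun e he => hQloc e (hPE _ (Finset.mem_image_of_mem _ he))⟩
      obtain ⟨i, hi⟩ := hQ j
      exact (congrArg v hi).trans_lt (hP i)
    by_cases hx : IsAlgebraic L x
    · exact exists_small_adjoin_of_isAlgebraic hv hL' hx E hE
    · exact exists_small_adjoin_of_transcendental hv hL' hx E hE
  obtain ⟨P, hP, -, hPE⟩ := key E hE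
  exact ⟨P, hP, hPE⟩

end ResidualPresentation

end FieldTower

section Immediate

open IsLocalRing

variable {V V' : Type*} [CommRing V] [IsDomain V] [ValuationRing V]
  [CommRing V'] [IsDomain V'] [ValuationRing V'] [Algebra V V']

theorem ValuationRing.valuation_le_one_iff {K' : Type*} [Field K'] [Algebra V' K']
    [IsFractionRing V' K'] (x : K') :
    ValuationRing.valuation V' K' x ≤ 1 ↔ ∃ a : V', algebraMap V' K' a = x := by
  rw [← ValuationRing.mem_integer_iff, Valuation.mem_integer_iff]

theorem ValuationRing.valuation_algebraMap_lt_one_iff {K' : Type*} [Field K'] [Algebra V' K']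
    [IsFractionRing V' K'] (b : V') :
    ValuationRing.valuation V' K' (algebraMap V' K' b) < 1 ↔ b ∈ maximalIdeal V' := by
  have hle : ValuationRing.valuation V' K' (algebraMap V' K' b) ≤ 1 :=
    (valuation_le_one_iff _).mpr ⟨b, rfl⟩
  rw [mem_maximalIdeal, mem_nonunits_iff, ← not_iff_not, not_not, not_lt]
  constructor
  · intro h
    have hb : algebraMap V' K' b ≠ 0 := by
      intro h0
      rw [h0, map_zero] at h
      exact absurd h (not_le.mpr zero_lt_one)
    obtain ⟨c, hc⟩ := (valuation_le_one_iff (V' := V') (algebraMap V' K' b)⁻¹).mp (by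
      rw [map_inv₀, le_antisymm hle h, inv_one])
    refine IsUnit.of_mul_eq_one c (IsFractionRing.injective V' K' ?_)
    rw [map_mul, hc, map_one, mul_inv_cancel₀ hb]
  · rintro ⟨u, rfl⟩
    have h1 : ValuationRing.valuation V' K' (algebraMap V' K' ↑u⁻¹) ≤ 1 :=
      (valuation_le_one_iff _).mpr ⟨_, rfl⟩
    calc 1 = ValuationRing.valuation V' K' (algebraMap V' K' (u * ↑u⁻¹)) := by simp
      _ ≤ _ := by
        rw [map_mul, map_mul]
        exact mul_le_of_le_one_right' h1

theorem IsImmediateExtension.isImmediateOver (himm : IsImmediateExtension V V') (K K' : Type*)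
    [Field K] [Algebra V K] [IsFractionRing V K] [Field K'] [Algebra V' K'] [IsFractionRing V' K']
    [Algebra V K'] [Algebra K K'] [IsScalarTower V K K'] [IsScalarTower V V' K'] :
    (ValuationRing.valuation V' K').IsImmediateOver V K := by
  obtain ⟨hinj, hloc, hres, hval⟩ := himm
  have hle : ∀ b : V', ValuationRing.valuation V' K' (algebraMap V' K' b) ≤ 1 := fun b =>
    (ValuationRing.valuation_le_one_iff _).mpr ⟨b, rfl⟩
  have hval_int : ∀ b : V', b ≠ 0 → ∃ c : K, ValuationRing.valuation V' K' (algebraMap K K' c) =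
      ValuationRing.valuation V' K' (algebraMap V' K' b) := by
    intro x hx
    obtain ⟨a, b, ha, hb, u, hu⟩ := hval x hx
    have hu1 : ValuationRing.valuation V' K' (algebraMap V' K' u) = 1 :=
      le_antisymm (hle _) (not_lt.mp fun h =>
        (ValuationRing.valuation_algebraMap_lt_one_iff _).mp h u.isUnit)
    have hb0 : algebraMap V' K' (algebraMap V V' b) ≠ 0 := by
      rw [Ne, map_eq_zero_iff _ (IsFractionRing.injective V' K'), map_eq_zero_iff _ hinj]
      exact hb
    refine ⟨algebraMap V K a / algebraMap V K b, ?_⟩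
    rw [map_div₀, ← IsScalarTower.algebraMap_apply, ← IsScalarTower.algebraMap_apply,
      IsScalarTower.algebraMap_apply V V' K', IsScalarTower.algebraMap_apply V V' K', map_div₀,
      div_eq_iff ((Valuation.ne_zero_iff _).mpr hb0), ← map_mul, ← map_mul, ← hu, map_mul, map_mul,
      hu1, mul_one]
  refine ⟨fun a => ?_, fun a ha => ?_, fun f hf => ?_, fun f hf => ?_⟩
  · rw [IsScalarTower.algebraMap_apply V V' K']
    exact hle _
  · rw [IsScalarTower.algebraMap_apply V V' K'] at ha
    by_contra h
    exact ((ValuationRing.valuation_algebraMap_lt_one_iff (K' := K') _).mpr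
      ((hloc a).mpr h)).ne ha
  · obtain ⟨x, rfl⟩ := (ValuationRing.valuation_le_one_iff f).mp hf
    obtain ⟨a, ha⟩ := hres x
    refine ⟨a, ?_⟩
    rw [IsScalarTower.algebraMap_apply V V' K', ← map_sub]
    exact (ValuationRing.valuation_algebraMap_lt_one_iff _).mpr ha
  · have hf0 : f ≠ 0 := (Valuation.ne_zero_iff _).mp hf
    obtain ⟨x, y, hy, rfl⟩ := IsFractionRing.div_surjective (A := V') f
    have hx : x ≠ 0 := by
      rintro rfl
      simp at hf0
    obtain ⟨c, hc⟩ := hval_int x hx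
    obtain ⟨d, hd⟩ := hval_int y (nonZeroDivisors.ne_zero hy)
    exact ⟨c / d, by rw [map_div₀, map_div₀, map_div₀, hc, hd]⟩

theorem IsImmediateExtension.exists_subalgebra_completeIntersection
    (himm : IsImmediateExtension V V') (E : Finset V') :
    ∃ B : Subalgebra V V', Algebra.IsCompleteIntersectionOfFiniteType V B ∧
      ∀ x ∈ E, x ∈ B := by
  classical
  let K := FractionRing V
  let K' := FractionRing V'
  have hinjK : Function.Injective (algebraMap V K') := by
    rw [IsScalarTower.algebraMap_eq V V' K', RingHom.coe_comp]
    exact (IsFractionRing.injective V' K').comp himm.1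
  let _ : Algebra K K' := (IsFractionRing.lift hinjK : K →+* K').toAlgebra
  have : IsScalarTower V K K' := IsScalarTower.of_algebraMap_eq fun a =>
    (IsFractionRing.lift_algebraMap hinjK a).symm
  obtain ⟨P, hP, hPE⟩ := ResidualPresentation.exists_small_adjoin
    (himm.isImmediateOver K K') (E.image (algebraMap V' K')) (E.image (algebraMap V' K')) (by
      intro z hz
      refine ⟨IntermediateField.subset_adjoin K _ hz, ?_⟩
      obtain ⟨x, -, rfl⟩ := Finset.mem_image.mp hz
      exact (ValuationRing.valuation_le_one_iff _).mpr ⟨x, rfl⟩)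
  obtain ⟨Q, hQ, hQloc⟩ := P.exists_comap (IsScalarTower.toAlgHom V V' K')
    (IsFractionRing.injective V' K') fun i =>
      (ValuationRing.valuation_le_one_iff _).mp (hP i).le
  refine Q.exists_subalgebra_completeIntersection (fun j => ?_) E fun x hx =>
    hQloc x (hPE _ (Finset.mem_image_of_mem _ hx))
  obtain ⟨i, hi⟩ := hQ j
  exact (ValuationRing.valuation_algebraMap_lt_one_iff (K' := K') _).mp
    ((congrArg _ hi).trans_lt (hP i))

theorem Algebra.IsCompleteIntersectionOfFiniteType.finiteType {R A : Type*} [CommRing R]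
    [CommRing A] [Algebra R A] (h : Algebra.IsCompleteIntersectionOfFiniteType R A) :
    Algebra.FiniteType R A := by
  obtain ⟨N, r, f, -, ⟨e⟩⟩ := h
  exact Algebra.FiniteType.equiv inferInstance e

end Immediate

/-- Let `V ⊆ V'` be an immediate extension of valuation rings.  Then `V'` is a filtered
union of its `V`-subalgebras which are complete intersection `V`-algebras of finite
type. -/
theorem immediate_extension_filtered_union_complete_intersection
    (V V' : Type u) [CommRing V] [IsDomain V] [ValuationRing V]
    [CommRing V'] [IsDomain V'] [ValuationRing V'] [Algebra V V']
    (himm : IsImmediateExtension V V') :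
    Subalgebra.IsFilteredUnion (fun B : Subalgebra V V' =>
      Algebra.IsCompleteIntersectionOfFiniteType V B) := by
  classical
  refine ⟨?_, ?_, fun s => ?_⟩
  · obtain ⟨B, hB, -⟩ := himm.exists_subalgebra_completeIntersection ∅
    exact ⟨B, hB⟩
  · intro A hA B hB
    obtain ⟨S, rfl⟩ := A.fg_iff_finiteType.mpr hA.finiteType
    obtain ⟨T, rfl⟩ := B.fg_iff_finiteType.mpr hB.finiteType
    obtain ⟨C, hC, hST⟩ := himm.exists_subalgebra_completeIntersection (S ∪ T)
    exact ⟨C, hC, Algebra.adjoin_le fun x hx => hST x (Finset.mem_union_left _ hx),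
      Algebra.adjoin_le fun x hx => hST x (Finset.mem_union_right _ hx)⟩
  · obtain ⟨B, hB, hs⟩ := himm.exists_subalgebra_completeIntersection {s}
    exact ⟨B, hB, hs s (Finset.mem_singleton_self s)⟩
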